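/- arXiv:2312.05240 — 7 statements merged into one kernel-verified Lean document; each statement's English description precedes it below -/
import Mathlib

section
/- For every prime p, the group ring F_{p²}[P] over the finite field with p² elements contains a unit that is not a trivial unit; moreover, if p = 2 or p ≡ 1 (mod 8), then the group ring F_p[P] over the field with p elements contains a unit that is not a trivial unit. -/
/-!
The units are Murray's: over a ring of characteristic `d`, Gardam's unit
`p + q a + r b + s ab` of `F₂[P]` keeps its shape once the coefficients `p, q, r, s` in the
commutative subring generated by `x = a²`, `y = b²`, `z = (ab)²` and their inverses carry the
factor `h = (1 - z) ^ (d - 2)`. That the explicit candidate for the inverse works is formal, apart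
from one relation between `h` and its image under `z ↦ z⁻¹`, which comes from the Frobenius identity
`h (1 - z)² = 1 - z ^ d`. The unit is nontrivial because its image in the group ring of a finite
dihedral quotient of `P`, of order 6 for `d = 2` and of order 8 for odd `d`, has several nonzero
coefficients.
-/

noncomputable section

/-- The two relators of the Promislow group `P = ⟨a, b | b⁻¹a²b = a⁻², a⁻¹b²a = b⁻²⟩`,
written as words that equal the identity: `b⁻¹a²ba²` and `a⁻¹b²ab²`. -/
def Prels : Set (FreeGroup (Fin 2)) :=
  {(FreeGroup.of 1)⁻¹ * (FreeGroup.of 0) ^ 2 * (FreeGroup.of 1) * (FreeGroup.of 0) ^ 2,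
   (FreeGroup.of 0)⁻¹ * (FreeGroup.of 1) ^ 2 * (FreeGroup.of 0) * (FreeGroup.of 1) ^ 2}

/-- The Promislow group. -/
abbrev P : Type := PresentedGroup Prels

def pa : P := PresentedGroup.of 0
def pb : P := PresentedGroup.of 1
def px : P := pa ^ 2
def py : P := pb ^ 2
def pz : P := (pa * pb) ^ 2

section MurrayElement

variable {R S : Type*} [Ring R] [Ring S]

/-- The coefficient of `1` in Murray's unit, as a function of `x = a²`, `y = b²`, `z = (ab)²` and
of the factor `h` that depends on the characteristic. -/
def murrayP (x y z : Rˣ) (h : R) : R :=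
  (1 + x) * (1 + y) * (1 + ↑z⁻¹) * h

/-- The coefficient of `a` in Murray's unit, with parameters as in `murrayP`. -/
def murrayQ (x y z : Rˣ) (h : R) : R :=
  ((1 + x) * (1 + ↑x⁻¹ * ↑y⁻¹) + (1 + ↑y⁻¹) * (1 + z)) * h

/-- The coefficient of `b` in Murray's unit, with parameters as in `murrayP`. -/
def murrayR (x y z : Rˣ) (h : R) : R :=
  ((1 + ↑y⁻¹) * (1 + x * y) * z + (1 + x) * (1 + z)) * h

/-- The coefficient of `a * b` in Murray's unit, with parameters as in `murrayP`. -/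
def murrayS (x y z : Rˣ) (h : R) : R :=
  ↑z⁻¹ ^ 2 + (4 + x + ↑x⁻¹ + y + ↑y⁻¹) * ↑z⁻¹ * h

/-- Murray's combination of `1`, `a`, `b` and `a * b` in any ring containing units `a` and `b`.
It makes sense for arbitrary `a` and `b`, which lets it be transported along ring homomorphisms. -/
def murrayElement (a b : Rˣ) (h : R) : R :=
  murrayP (a ^ 2) (b ^ 2) ((a * b) ^ 2) h + murrayQ (a ^ 2) (b ^ 2) ((a * b) ^ 2) h * a +
    murrayR (a ^ 2) (b ^ 2) ((a * b) ^ 2) h * b + murrayS (a ^ 2) (b ^ 2) ((a * b) ^ 2) h * (a * b)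

variable (f : R →+* S) (x y z : Rˣ) (h : R)

theorem map_murrayP : f (murrayP x y z h) =
    murrayP (Units.map ↑f x) (Units.map ↑f y) (Units.map ↑f z) (f h) := by
  simp [murrayP]

theorem map_murrayQ : f (murrayQ x y z h) =
    murrayQ (Units.map ↑f x) (Units.map ↑f y) (Units.map ↑f z) (f h) := by
  simp [murrayQ]

theorem map_murrayR : f (murrayR x y z h) =
    murrayR (Units.map ↑f x) (Units.map ↑f y) (Units.map ↑f z) (f h) := by
  simp [murrayR]

theorem map_murrayS : f (murrayS x y z h) =
    murrayS (Units.map ↑f x) (Units.map ↑f y) (Units.map ↑f z) (f h) := by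
  simp [murrayS, map_ofNat f]

theorem map_murrayElement (a b : Rˣ) : f (murrayElement a b h) =
    murrayElement (Units.map ↑f a) (Units.map ↑f b) (f h) := by
  simp [murrayElement, map_murrayP, map_murrayQ, map_murrayR, map_murrayS]

end MurrayElement

/-- A ring `R` with units `a`, `b` acting on a commutative ring of coefficients `A` the way the
generators of the Promislow group act by conjugation on the group ring of its subgroup
`⟨a², b², (ab)²⟩`: `σ` and `τ` are conjugation by `a` and by `b`, and `x`, `y`, `z` stand for `a²`,
`b²`, `(ab)²`. Neither `φ` nor the span of `1, a, b, ab` is required to be faithful. -/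
structure PromislowExtension (A R : Type*) [CommRing A] [Ring R] where
  φ : A →+* R
  (a b : Rˣ)
  (x y z : Aˣ)
  (σ τ : A →+* A)
  map_x : Units.map ↑φ x = a ^ 2
  map_y : Units.map ↑φ y = b ^ 2
  map_z : Units.map ↑φ z = (a * b) ^ 2
  semiconj_a (f : A) : SemiconjBy ↑a (φ f) (φ (σ f))
  semiconj_b (f : A) : SemiconjBy ↑b (φ f) (φ (τ f))
  σ_x : Units.map ↑σ x = x
  σ_y : Units.map ↑σ y = y⁻¹
  σ_z : Units.map ↑σ z = z⁻¹
  τ_x : Units.map ↑τ x = x⁻¹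
  τ_y : Units.map ↑τ y = y
  τ_z : Units.map ↑τ z = z⁻¹

namespace PromislowExtension

variable {A R : Type*} [CommRing A] [Ring R] (E : PromislowExtension A R)

theorem σ_coe_units (u : Aˣ) : E.σ u = (Units.map ↑E.σ u : Aˣ) := rfl

theorem τ_coe_units (u : Aˣ) : E.τ u = (Units.map ↑E.τ u : Aˣ) := rfl

theorem a_mul (f : A) : E.a * E.φ f = E.φ (E.σ f) * E.a := (E.semiconj_a f).eq

theorem b_mul (f : A) : E.b * E.φ f = E.φ (E.τ f) * E.b := (E.semiconj_b f).eq

theorem semiconj_ab (f : A) : SemiconjBy (E.a * E.b : R) (E.φ f) (E.φ (E.σ (E.τ f))) :=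
  (E.semiconj_a _).mul_left (E.semiconj_b f)

theorem a_mul_a : (E.a * E.a : R) = E.φ E.x := by
  simpa [pow_two] using (congrArg Units.val E.map_x).symm

theorem b_mul_b : (E.b * E.b : R) = E.φ E.y := by
  simpa [pow_two] using (congrArg Units.val E.map_y).symm

theorem ab_mul_ab : (E.a * E.b * (E.a * E.b) : R) = E.φ E.z := by
  simpa [pow_two] using (congrArg Units.val E.map_z).symm

theorem a_mul_ab : (E.a * (E.a * E.b) : R) = E.φ E.x * E.b := by
  rw [← mul_assoc, a_mul_a]

theorem ab_mul_b : (E.a * E.b * E.b : R) = E.φ ↑E.y⁻¹ * E.a := by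
  rw [mul_assoc, b_mul_b, a_mul, σ_coe_units, σ_y]

theorem b_mul_a : (E.b * E.a : R) = E.φ (↑E.x⁻¹ * E.y * ↑E.z⁻¹) * (E.a * E.b) := by
  have conj : E.φ E.x * (E.b * E.a) * E.φ E.y = E.φ ↑E.z⁻¹ * (E.a * E.b) :=
    calc E.φ E.x * (E.b * E.a) * E.φ E.y
      _ = E.a * (E.a * E.b * (E.a * E.b)) * E.b := by
        simp only [← a_mul_a, ← b_mul_b, mul_assoc]
      _ = E.φ ↑E.z⁻¹ * (E.a * E.b) := by
        rw [ab_mul_ab, a_mul, σ_coe_units, σ_z, mul_assoc]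
  have move_y : E.b * E.a * E.φ E.y = E.φ ↑E.y⁻¹ * (E.b * E.a) := by
    rw [mul_assoc, a_mul, ← mul_assoc, b_mul, σ_coe_units, σ_y, τ_coe_units, map_inv, τ_y,
      mul_assoc]
  rw [mul_assoc, move_y, ← mul_assoc, ← map_mul] at conj
  calc (E.b * E.a : R) = E.φ (↑E.x⁻¹ * E.y) * (E.φ (E.x * ↑E.y⁻¹) * (E.b * E.a)) := by
        rw [← mul_assoc, ← map_mul, mul_comm (E.x : A), mul_assoc, Units.mul_inv_cancel_left,
          Units.inv_mul, map_one, one_mul]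
    _ = E.φ (↑E.x⁻¹ * E.y * ↑E.z⁻¹) * (E.a * E.b) := by rw [conj, ← mul_assoc, ← map_mul]

theorem ab_mul_a : (E.a * E.b * E.a : R) = E.φ (↑E.y⁻¹ * E.z) * E.b := by
  rw [mul_assoc, b_mul_a, ← mul_assoc, a_mul, mul_assoc, a_mul_ab, ← mul_assoc, ← map_mul]
  simp only [map_mul E.σ, σ_coe_units, map_inv, σ_x, σ_y, σ_z, inv_inv]
  rw [mul_comm, mul_assoc, Units.mul_inv_cancel_left]

theorem b_mul_ab : (E.b * (E.a * E.b) : R) = E.φ (↑E.x⁻¹ * ↑E.z⁻¹) * E.a := by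
  rw [← mul_assoc, b_mul_a, mul_assoc, ab_mul_b, ← mul_assoc, ← map_mul, mul_right_comm _ (E.y : A),
    Units.mul_inv_cancel_right]

/-- The general element `p + q a + r b + s ab` of the subring generated by `A`, `a` and `b`. -/
def elt (p q r s : A) : R := E.φ p + E.φ q * E.a + E.φ r * E.b + E.φ s * (E.a * E.b)

theorem elt_one : E.elt 1 0 0 0 = 1 := by simp [elt]

theorem elt_mul_elt (p q r s p' q' r' s' : A) :
    E.elt p q r s * E.elt p' q' r' s' =
      E.elt
        (p * p' + q * E.σ q' * E.x + r * E.τ r' * E.y + s * E.σ (E.τ s') * E.z)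
        (p * q' + q * E.σ p' + r * E.τ s' * (↑E.x⁻¹ * ↑E.z⁻¹) + s * E.σ (E.τ r') * ↑E.y⁻¹)
        (p * r' + q * E.σ s' * E.x + r * E.τ p' + s * E.σ (E.τ q') * (↑E.y⁻¹ * E.z))
        (p * s' + q * E.σ r' + r * E.τ q' * (↑E.x⁻¹ * E.y * ↑E.z⁻¹) + s * E.σ (E.τ p')) := by
  have twist {g : R} {γ : A → A} (hg : ∀ f, SemiconjBy g (E.φ f) (E.φ (γ f))) (f f' : A) (g' : R) :
      E.φ f * g * (E.φ f' * g') = E.φ (f * γ f') * (g * g') := by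
    rw [mul_assoc, ← mul_assoc g, (hg f').eq, map_mul, mul_assoc, mul_assoc]
  have twist_one {g : R} {γ : A → A} (hg : ∀ f, SemiconjBy g (E.φ f) (E.φ (γ f))) (f f' : A) :
      E.φ f * g * E.φ f' = E.φ (f * γ f') * g := by
    simpa only [mul_one] using twist hg f f' 1
  simp only [elt, mul_add, add_mul, twist E.semiconj_a, twist E.semiconj_b, twist E.semiconj_ab,
    twist_one E.semiconj_a, twist_one E.semiconj_b, twist_one E.semiconj_ab, a_mul_a, b_mul_b,
    ab_mul_ab, a_mul_ab, ab_mul_b, b_mul_a, ab_mul_a, b_mul_ab]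
  simp only [map_add, map_mul, add_mul, mul_assoc]
  abel

/-- Murray's element with `h = (1 - z) ^ n`. -/
def murray (n : ℕ) : R :=
  E.elt (murrayP E.x E.y E.z ((1 - E.z) ^ n)) (murrayQ E.x E.y E.z ((1 - E.z) ^ n))
    (murrayR E.x E.y E.z ((1 - E.z) ^ n)) (murrayS E.x E.y E.z ((1 - E.z) ^ n))

/-- The inverse of `murray n`, under the condition on `n` in `murray_mul_murrayInv`. In terms of
the coefficients `p, q, r, s` of `murray n` it is `x⁻¹ σ(p) - x⁻¹ q a - y⁻¹ r b + z⁻¹ σ(s) ab`. -/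
def murrayInv (n : ℕ) : R :=
  E.elt (↑E.x⁻¹ * E.σ (murrayP E.x E.y E.z ((1 - E.z) ^ n)))
    (-(↑E.x⁻¹ * murrayQ E.x E.y E.z ((1 - E.z) ^ n)))
    (-(↑E.y⁻¹ * murrayR E.x E.y E.z ((1 - E.z) ^ n)))
    (↑E.z⁻¹ * E.σ (murrayS E.x E.y E.z ((1 - E.z) ^ n)))

theorem murray_eq (n : ℕ) : E.murray n = murrayElement E.a E.b ((1 - (E.a * E.b) ^ 2) ^ n) := by
  simp only [murray, elt, murrayElement, map_murrayP, map_murrayQ, map_murrayR, map_murrayS,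
    map_x, map_y, map_z, map_pow, map_sub, map_one, pow_two, ab_mul_ab]

section Inverse

variable {n : ℕ}
  (key : E.z * (1 - E.z) ^ n + ↑E.z⁻¹ * (1 - ↑E.z⁻¹) ^ n +
    (1 - E.z) ^ n * (1 - ↑E.z⁻¹) ^ n * (1 - E.z) * (1 - ↑E.z⁻¹) = (0 : A))
include key

theorem murray_mul_murrayInv : E.murray n * E.murrayInv n = 1 := by
  have hx := E.x.mul_inv
  have hy := E.y.mul_inv
  have hz := E.z.mul_inv
  rw [murray, murrayInv, elt_mul_elt, ← E.elt_one]
  congr 1 <;>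
  · simp only [murrayP, murrayQ, murrayR, murrayS, map_add, map_sub, map_mul, map_neg, map_one,
      map_pow, map_ofNat, σ_coe_units, τ_coe_units, map_inv, σ_x, σ_y, σ_z, τ_x, τ_y, τ_z, inv_inv]
    generalize (1 - E.z : A) ^ n = h, (1 - ↑E.z⁻¹ : A) ^ n = h' at *
    generalize (↑E.x⁻¹ : A) = xi, (↑E.y⁻¹ : A) = yi, (↑E.z⁻¹ : A) = zi at *
    grind

theorem murrayInv_mul_murray : E.murrayInv n * E.murray n = 1 := by
  have hx := E.x.mul_inv
  have hy := E.y.mul_inv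
  have hz := E.z.mul_inv
  rw [murray, murrayInv, elt_mul_elt, ← E.elt_one]
  congr 1 <;>
  · simp only [murrayP, murrayQ, murrayR, murrayS, map_add, map_sub, map_mul, map_one,
      map_pow, map_ofNat, σ_coe_units, τ_coe_units, map_inv, σ_x, σ_y, σ_z, τ_x, τ_y, τ_z, inv_inv]
    generalize (1 - E.z : A) ^ n = h, (1 - ↑E.z⁻¹ : A) ^ n = h' at *
    generalize (↑E.x⁻¹ : A) = xi, (↑E.y⁻¹ : A) = yi, (↑E.z⁻¹ : A) = zi at *
    grind

theorem isUnit_murrayElement : IsUnit (murrayElement E.a E.b ((1 - (E.a * E.b) ^ 2) ^ n)) := by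
  rw [← murray_eq]
  exact ⟨⟨_, _, E.murray_mul_murrayInv key, E.murrayInv_mul_murray key⟩, rfl⟩

end Inverse

end PromislowExtension

theorem mul_one_sub_pow_add_inv_mul_one_sub_inv_pow {A : Type*} [CommRing A] (d : ℕ)
    [Fact d.Prime] [CharP A d] (z : Aˣ) :
    z * (1 - z) ^ (d - 2) + ↑z⁻¹ * (1 - ↑z⁻¹) ^ (d - 2) +
      (1 - z) ^ (d - 2) * (1 - ↑z⁻¹) ^ (d - 2) * (1 - z) * (1 - ↑z⁻¹) = (0 : A) := by
  obtain ⟨n, rfl⟩ := Nat.exists_eq_add_of_le' (Fact.out : d.Prime).two_le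
  have hz := z.mul_inv
  have hzn : (z : A) ^ n * (↑z⁻¹ : A) ^ n = 1 := by rw [← mul_pow, hz, one_pow]
  have frobenius : (1 - z : A) ^ n * (1 - z) ^ 2 = 1 - z ^ n * z ^ 2 := by
    rw [← pow_add, ← pow_add, sub_pow_char, one_pow]
  have neg_one_pow : (-1 : A) ^ n = -1 := by
    simpa [pow_add] using neg_one_pow_char A (n + 2)
  have conj : (1 - ↑z⁻¹ : A) ^ n = -((↑z⁻¹ : A) ^ n * (1 - z) ^ n) := by
    rw [← mul_pow, ← neg_one_mul, ← neg_one_pow, ← mul_pow]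
    congr 1
    linear_combination -hz
  rw [Nat.add_sub_cancel, conj]
  linear_combination (↑z⁻¹ * (↑z⁻¹ : A) ^ n * (1 - z : A) ^ n) * frobenius +
    ((↑z⁻¹ : A) ^ n * ((1 - z : A) ^ n) ^ 2 * (1 - z) - z * (1 - z : A) ^ n) * hz -
    ↑z⁻¹ * (1 - z : A) ^ n * z ^ 2 * hzn

theorem semiconjBy_self_inv_of_inv_mul_mul_mul_eq_one {G : Type*} [Group G] {g t : G}
    (h : g⁻¹ * t * g * t = 1) : SemiconjBy g t t⁻¹ := by
  have conj_inv : SemiconjBy g t⁻¹ t := by rw [SemiconjBy, ← eq_inv_of_mul_eq_one_left h]; group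
  simpa only [inv_inv] using conj_inv.inv_right

theorem commute_sq_of_semiconjBy_inv {G : Type*} [Group G] {g t : G} (h : SemiconjBy g t t⁻¹) :
    Commute (g ^ 2) t := by
  rw [Commute, pow_two]
  simpa only [inv_inv] using h.inv_right.mul_left h

/-- A pair of elements of a group satisfying the two relations of the Promislow group. -/
structure IsPromislowPair {G : Type*} [Group G] (a b : G) : Prop where
  semiconjBy_b_sq_a : SemiconjBy b (a ^ 2) (a ^ 2)⁻¹
  semiconjBy_a_sq_b : SemiconjBy a (b ^ 2) (b ^ 2)⁻¹

/-- The free abelian group of rank 3, mapping to any group with a Promislow pair `a, b` by sending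
its basis to `a²`, `b²`, `(ab)²`. -/
abbrev TranslationLattice : Type := Multiplicative ℤ × Multiplicative ℤ × Multiplicative ℤ

namespace TranslationLattice

/-- The automorphism of the lattice induced by conjugation by `a`. -/
def conjA : TranslationLattice →* TranslationLattice :=
  .prodMap (.id _) (.prodMap invMonoidHom invMonoidHom)

/-- The automorphism of the lattice induced by conjugation by `b`. -/
def conjB : TranslationLattice →* TranslationLattice :=
  .prodMap invMonoidHom (.prodMap (.id _) invMonoidHom)

end TranslationLattice

namespace IsPromislowPair

variable {G H : Type*} [Group G] [Group H] {a b : G}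

theorem map (h : IsPromislowPair a b) (f : G →* H) : IsPromislowPair (f a) (f b) where
  semiconjBy_b_sq_a := by simpa using h.semiconjBy_b_sq_a.map f
  semiconjBy_a_sq_b := by simpa using h.semiconjBy_a_sq_b.map f

section Relations

variable (h : IsPromislowPair a b)
include h

theorem commute_sq_sq : Commute (a ^ 2) (b ^ 2) :=
  commute_sq_of_semiconjBy_inv h.semiconjBy_a_sq_b

theorem sq_mul_swap : (b * a) ^ 2 = ((a * b) ^ 2)⁻¹ := by
  refine eq_inv_of_mul_eq_one_left ?_
  calc (b * a) ^ 2 * (a * b) ^ 2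
    _ = b * a * (b * a ^ 2) * b * a * b := by simp only [pow_two, mul_assoc]
    _ = b * a⁻¹ * b ^ 2 * a * b := by rw [h.semiconjBy_b_sq_a.eq]; simp only [pow_two]; group
    _ = b * (a⁻¹ * (b ^ 2 * a)) * b := by group
    _ = 1 := by rw [← inv_inv (b ^ 2), ← h.semiconjBy_a_sq_b.inv_right.eq]; group

theorem semiconjBy_a_sq_mul : SemiconjBy a ((a * b) ^ 2) ((a * b) ^ 2)⁻¹ := by
  have conj_swap : SemiconjBy a ((b * a) ^ 2) ((a * b) ^ 2) := by
    simp only [SemiconjBy, pow_two, mul_assoc]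
  simpa [h.sq_mul_swap] using conj_swap.inv_right

theorem semiconjBy_b_sq_mul : SemiconjBy b ((a * b) ^ 2) ((a * b) ^ 2)⁻¹ := by
  rw [← h.sq_mul_swap]
  simp only [SemiconjBy, pow_two, mul_assoc]

theorem commute_sq_left_sq_mul : Commute (a ^ 2) ((a * b) ^ 2) :=
  commute_sq_of_semiconjBy_inv h.semiconjBy_a_sq_mul

theorem commute_sq_right_sq_mul : Commute (b ^ 2) ((a * b) ^ 2) :=
  commute_sq_of_semiconjBy_inv h.semiconjBy_b_sq_mul

end Relations

variable (h : IsPromislowPair a b)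

/-- The homomorphism sending the basis of the lattice to `a²`, `b²`, `(ab)²`. -/
def latticeHom : TranslationLattice →* G :=
  (zpowersHom _ (a ^ 2)).noncommCoprod
    ((zpowersHom _ (b ^ 2)).noncommCoprod (zpowersHom _ ((a * b) ^ 2))
      fun _ _ => h.commute_sq_right_sq_mul.zpow_zpow _ _)
    fun _ _ => (h.commute_sq_sq.zpow_zpow _ _).mul_right (h.commute_sq_left_sq_mul.zpow_zpow _ _)

theorem latticeHom_apply (t : TranslationLattice) : h.latticeHom t =
    (a ^ 2) ^ t.1.toAdd * ((b ^ 2) ^ t.2.1.toAdd * ((a * b) ^ 2) ^ t.2.2.toAdd) := rfl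

theorem semiconjBy_a_latticeHom (t : TranslationLattice) :
    SemiconjBy a (h.latticeHom t) (h.latticeHom (TranslationLattice.conjA t)) := by
  have ha : SemiconjBy a (a ^ 2) (a ^ 2) := Commute.self_pow a 2
  simpa [latticeHom_apply, TranslationLattice.conjA] using
    (ha.zpow_right t.1.toAdd).mul_right ((h.semiconjBy_a_sq_b.zpow_right t.2.1.toAdd).mul_right
      (h.semiconjBy_a_sq_mul.zpow_right t.2.2.toAdd))

theorem semiconjBy_b_latticeHom (t : TranslationLattice) :
    SemiconjBy b (h.latticeHom t) (h.latticeHom (TranslationLattice.conjB t)) := by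
  have hb : SemiconjBy b (b ^ 2) (b ^ 2) := Commute.self_pow b 2
  simpa [latticeHom_apply, TranslationLattice.conjB] using
    (h.semiconjBy_b_sq_a.zpow_right t.1.toAdd).mul_right ((hb.zpow_right t.2.1.toAdd).mul_right
      (h.semiconjBy_b_sq_mul.zpow_right t.2.2.toAdd))

end IsPromislowPair

section GroupRing

open MonoidAlgebra (mapDomainRingHom)

/-- The group elements as units of the group ring. -/
def groupUnit (K G : Type*) [Semiring K] [Group G] : G →* (MonoidAlgebra K G)ˣ :=
  (MonoidAlgebra.of K G).toHomUnits

theorem val_groupUnit (K : Type*) {G : Type*} [Semiring K] [Group G] (g : G) :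
    (groupUnit K G g : MonoidAlgebra K G) = .single g 1 := rfl

theorem map_groupUnit (K : Type*) {G H : Type*} [Semiring K] [Group G] [Group H] (f : G →* H)
    (g : G) : Units.map ↑(mapDomainRingHom K f) (groupUnit K G g) = groupUnit K H (f g) := by
  ext1; simp [val_groupUnit]

theorem semiconjBy_lift_mapDomainRingHom {k M R : Type*} [CommRing k] [Monoid M] [Ring R]
    [Algebra k R] {F : M →* R} {σ : M →* M} {c : R} (hc : ∀ m, SemiconjBy c (F m) (F (σ m)))
    (f : MonoidAlgebra k M) :
    SemiconjBy c (MonoidAlgebra.lift k R M F f)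
      (MonoidAlgebra.lift k R M F (mapDomainRingHom k σ f)) := by
  induction f using MonoidAlgebra.induction_on with
  | of m => simpa using hc m
  | add f g hf hg => simpa only [map_add] using hf.add_right hg
  | smul r f hf => simpa using hf.smul_right r

/-- The extension of the group ring of the lattice defined by a Promislow pair of units. -/
def IsPromislowPair.extension (k : Type*) {R : Type*} [CommRing k] [Ring R]
    [Algebra k R] {a b : Rˣ} (h : IsPromislowPair a b) :
    PromislowExtension (MonoidAlgebra k TranslationLattice) R where
  φ := (MonoidAlgebra.lift k R TranslationLattice ((Units.coeHom R).comp h.latticeHom)).toRingHom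
  a := a
  b := b
  x := groupUnit k TranslationLattice (.ofAdd 1, 1, 1)
  y := groupUnit k TranslationLattice (1, .ofAdd 1, 1)
  z := groupUnit k TranslationLattice (1, 1, .ofAdd 1)
  σ := mapDomainRingHom k TranslationLattice.conjA
  τ := mapDomainRingHom k TranslationLattice.conjB
  map_x := by ext; simp [val_groupUnit, IsPromislowPair.latticeHom_apply]
  map_y := by ext; simp [val_groupUnit, IsPromislowPair.latticeHom_apply]
  map_z := by ext; simp [val_groupUnit, IsPromislowPair.latticeHom_apply]
  semiconj_a := semiconjBy_lift_mapDomainRingHom fun t => (h.semiconjBy_a_latticeHom t).units_val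
  semiconj_b := semiconjBy_lift_mapDomainRingHom fun t => (h.semiconjBy_b_latticeHom t).units_val
  σ_x := by ext1; simp [val_groupUnit, TranslationLattice.conjA]
  σ_y := by ext1; simp [val_groupUnit, TranslationLattice.conjA, ← map_inv]
  σ_z := by ext1; simp [val_groupUnit, TranslationLattice.conjA, ← map_inv]
  τ_x := by ext1; simp [val_groupUnit, TranslationLattice.conjB, ← map_inv]
  τ_y := by ext1; simp [val_groupUnit, TranslationLattice.conjB]
  τ_z := by ext1; simp [val_groupUnit, TranslationLattice.conjB, ← map_inv]

theorem IsPromislowPair.isUnit_murrayElement {R : Type*} [Ring R] (d : ℕ) [Fact d.Prime]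
    [Algebra (ZMod d) R] {a b : Rˣ} (h : IsPromislowPair a b) :
    IsUnit (murrayElement a b ((1 - (a * b) ^ 2) ^ (d - 2))) := by
  have : CharP (MonoidAlgebra (ZMod d) TranslationLattice) d :=
    charP_of_injective_algebraMap (FaithfulSMul.algebraMap_injective (ZMod d) _) d
  exact (h.extension (ZMod d)).isUnit_murrayElement
    (mul_one_sub_pow_add_inv_mul_one_sub_inv_pow d _)

/-- Murray's element of the group ring `K[G]` attached to group elements `a` and `b`, with
`h = (1 - (ab)²) ^ n`. -/
def groupMurrayElement (K : Type*) {G : Type*} [Ring K] [Group G] (a b : G) (n : ℕ) :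
    MonoidAlgebra K G :=
  murrayElement (groupUnit K G a) (groupUnit K G b)
    ((1 - (groupUnit K G a * groupUnit K G b) ^ 2) ^ n)

theorem map_groupMurrayElement (K : Type*) {G H : Type*} [Ring K] [Group G] [Group H]
    (f : G →* H) (a b : G) (n : ℕ) :
    mapDomainRingHom K f (groupMurrayElement K a b n) = groupMurrayElement K (f a) (f b) n := by
  simp only [groupMurrayElement, map_murrayElement, map_groupUnit, map_pow, map_sub, map_one,
    map_mul, val_groupUnit, MonoidAlgebra.mapDomainRingHom_apply, MonoidAlgebra.mapDomain_single]

theorem ne_single_of_coeff_mapDomainRingHom_ne_zero {K G H : Type*} [Semiring K] [Monoid G]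
    [Monoid H] (f : G →* H) {u : MonoidAlgebra K G} {s t : H} (hst : s ≠ t)
    (hs : (mapDomainRingHom K f u).coeff s ≠ 0) (ht : (mapDomainRingHom K f u).coeff t ≠ 0)
    (g : G) (c : K) : u ≠ .single g c := by
  classical
  rintro rfl
  simp only [MonoidAlgebra.mapDomainRingHom_apply, MonoidAlgebra.mapDomain_single,
    MonoidAlgebra.coeff_single, Finsupp.single_apply, ne_eq, ite_eq_right_iff, not_forall] at hs ht
  exact hst (hs.1.symm.trans ht.1)

end GroupRing

section DihedralRelations

variable {R : Type*} [Ring R] {a b : Rˣ}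

theorem murrayElement_of_two_eq_zero (two : (2 : R) = 0) (ha : a ^ 3 = 1) (hb : b ^ 2 = 1)
    (hab : (a * b) ^ 2 = 1) :
    murrayElement a b 1 = (1 + a ^ 2 + (1 + a + a ^ 2) * b : R) := by
  have a_sq_inv : (a ^ 2)⁻¹ = a := inv_eq_of_mul_eq_one_right (by rw [← pow_succ, ha])
  have a_cubed : (a : R) ^ 3 = 1 := by simpa using congrArg Units.val ha
  have four : (4 : R) = 0 := by rw [← two_add_two_eq_four, two, add_zero]
  have a_mul_a : (a * a : R) = a ^ 2 := (pow_two _).symm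
  have a_sq_mul_a : (a ^ 2 * a : R) = 1 := by rw [← pow_succ, a_cubed]
  simp only [murrayElement, murrayP, murrayQ, murrayR, murrayS, hb, hab, a_sq_inv, inv_one,
    Units.val_one, Units.val_pow_eq_pow_val]
  simp only [mul_one, one_pow, one_add_one_eq_two, two, four, zero_mul, mul_zero, add_zero,
    zero_add, add_mul, mul_add, one_mul, a_mul_a, ← mul_assoc, a_sq_mul_a]
  calc _ = (1 + a ^ 2 + (b + a * b + a ^ 2 * b) + 2 * (a + a * b) : R) := by noncomm_ring
    _ = _ := by rw [two, zero_mul, add_zero]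

theorem one_sub_pow_succ_of_sq_eq_one {t : R} (ht : t ^ 2 = 1) (n : ℕ) :
    (1 - t) ^ (n + 1) = 2 ^ n * (1 - t) := by
  have sq : (1 - t) * (1 - t) = 2 * (1 - t) := by
    rw [pow_two] at ht
    rw [mul_sub, sub_mul, sub_mul, ht]
    noncomm_ring
  induction n with
  | zero => simp
  | succ n ih => rw [pow_succ, ih, mul_assoc, sq, ← mul_assoc, pow_succ]

theorem murrayElement_of_sq_eq_one (ha : a ^ 2 = 1) (hb : b ^ 2 = 1) (hab : (a * b) ^ 4 = 1)
    (n : ℕ) : murrayElement a b ((1 - (a * b) ^ 2) ^ (n + 1)) =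
      (2 ^ (n + 2) * (1 - (a * b) ^ 2) * (a - b) +
        (1 - 2 ^ (n + 3) * (1 - (a * b) ^ 2)) * (a * b) : R) := by
  have inv_ab_sq : ((a * b) ^ 2)⁻¹ = (a * b) ^ 2 :=
    inv_eq_of_mul_eq_one_right (by rw [← pow_add, hab])
  have sq_sq : ((a * b : R) ^ 2) ^ 2 = 1 := by
    simpa [← pow_mul] using congrArg Units.val hab
  simp only [murrayElement, murrayP, murrayQ, murrayR, murrayS, ha, hb, inv_ab_sq, inv_one,
    Units.val_one, Units.val_pow_eq_pow_val, Units.val_mul, one_sub_pow_succ_of_sq_eq_one sq_sq]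
  generalize (a * b : R) ^ 2 = z at *
  have z_mul : z * (2 ^ n * (1 - z)) = -(2 ^ n * (1 - z)) := by
    rw [← mul_assoc, ← ((Commute.ofNat_left 2 z).pow_left n).eq, mul_assoc, mul_sub, ← pow_two,
      sq_sq]
    noncomm_ring
  simp only [mul_assoc _ _ (2 ^ n * (1 - z)), add_mul _ _ (2 ^ n * (1 - z)), one_mul, z_mul,
    mul_one, sq_sq]
  generalize 1 - z = w
  have two_pow_add_two : (2 : R) ^ (n + 2) = 4 * 2 ^ n := by rw [add_comm, pow_add]; norm_num
  have two_pow_add_three : (2 : R) ^ (n + 3) = 8 * 2 ^ n := by rw [add_comm, pow_add]; norm_num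
  rw [two_pow_add_two, two_pow_add_three]
  noncomm_ring

end DihedralRelations

section DihedralQuotients

open DihedralGroup
open MonoidAlgebra (single_mul_single single_pow singleOneRingHom)

theorem isPromislowPair_pa_pb : IsPromislowPair pa pb where
  semiconjBy_b_sq_a := semiconjBy_self_inv_of_inv_mul_mul_mul_eq_one
    (PresentedGroup.one_of_mem (rels := Prels) (Or.inl rfl))
  semiconjBy_a_sq_b := semiconjBy_self_inv_of_inv_mul_mul_mul_eq_one
    (PresentedGroup.one_of_mem (rels := Prels) (Or.inr rfl))

/-- The quotient map of `P` onto the dihedral group of order 6 in which `b` and `ab` become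
reflections. It separates the terms of Murray's element in characteristic 2. -/
def toDihedralThree : P →* DihedralGroup 3 :=
  PresentedGroup.toGroup (f := ![r 1, sr 0]) (by rintro _ (rfl | rfl) <;> decide)

/-- The quotient map of `P` onto the dihedral group of order 8 in which `a` and `b` become
reflections. It separates the terms of Murray's element in odd characteristic. -/
def toDihedralFour : P →* DihedralGroup 4 :=
  PresentedGroup.toGroup (f := ![sr 0, sr 1]) (by
    rintro _ (rfl | rfl)
    all_goals
      simp only [map_mul, map_inv, map_pow, FreeGroup.lift_apply_of]
      decide)

theorem toDihedralThree_pa : toDihedralThree pa = r 1 := PresentedGroup.toGroup.of _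

theorem toDihedralThree_pb : toDihedralThree pb = sr 0 := PresentedGroup.toGroup.of _

theorem toDihedralFour_pa : toDihedralFour pa = sr 0 := PresentedGroup.toGroup.of _

theorem toDihedralFour_pb : toDihedralFour pb = sr 1 := PresentedGroup.toGroup.of _

variable (K : Type*) [Ring K]

theorem groupMurrayElement_dihedralThree (two : (2 : K) = 0) :
    groupMurrayElement K (r 1 : DihedralGroup 3) (sr 0) 0 =
      .single (r 0) 1 + .single (r 2) 1 +
        (.single (sr 0) 1 + .single (sr 2) 1 + .single (sr 1) 1) := by
  have two_eq_zero : (2 : MonoidAlgebra K (DihedralGroup 3)) = 0 := by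
    rw [← map_ofNat singleOneRingHom, OfNat.ofNat, two, map_zero]
  rw [groupMurrayElement, pow_zero, murrayElement_of_two_eq_zero two_eq_zero]
  · simp only [val_groupUnit, add_mul, single_mul_single, single_pow, one_pow, one_mul]
    rfl
  all_goals simp only [← map_pow, ← map_mul]; rfl

theorem groupMurrayElement_dihedralFour (n : ℕ) :
    groupMurrayElement K (sr 0 : DihedralGroup 4) (sr 1) (n + 1) =
      .single (r 0) (2 ^ (n + 2)) * (.single (r 0) 1 - .single (r 2) 1) *
          (.single (sr 0) 1 - .single (sr 1) 1) +
        (.single (r 0) 1 - .single (r 0) (2 ^ (n + 3)) * (.single (r 0) 1 - .single (r 2) 1)) *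
          .single (r 1) 1 := by
  have two_pow (k : ℕ) : (2 : MonoidAlgebra K (DihedralGroup 4)) ^ k = .single (r 0) (2 ^ k) := by
    rw [← map_ofNat singleOneRingHom, ← map_pow]; rfl
  rw [groupMurrayElement, murrayElement_of_sq_eq_one]
  · simp only [two_pow, val_groupUnit, single_mul_single, single_pow, one_pow, one_mul]
    rfl
  all_goals simp only [← map_pow, ← map_mul]; rfl

theorem groupMurrayElement_ne_single_of_two_eq_zero [Nontrivial K] (two : (2 : K) = 0) (g : P)
    (c : K) : groupMurrayElement K pa pb 0 ≠ .single g c := by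
  apply ne_single_of_coeff_mapDomainRingHom_ne_zero toDihedralThree (s := r 0) (t := r 2)
    (by decide)
  all_goals
    rw [map_groupMurrayElement, toDihedralThree_pa, toDihedralThree_pb,
      groupMurrayElement_dihedralThree K two]
    simp +decide

theorem groupMurrayElement_ne_single_of_two_pow_ne_zero (n : ℕ) (hn : (2 : K) ^ (n + 2) ≠ 0)
    (g : P) (c : K) : groupMurrayElement K pa pb (n + 1) ≠ .single g c := by
  apply ne_single_of_coeff_mapDomainRingHom_ne_zero toDihedralFour (s := sr 0) (t := sr 1)
    (by decide)
  all_goals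
    rw [map_groupMurrayElement, toDihedralFour_pa, toDihedralFour_pb,
      groupMurrayElement_dihedralFour]
    simp +decide [mul_sub, sub_mul, single_mul_single, hn]

theorem groupMurrayElement_ne_single (d : ℕ) [Fact d.Prime] [CharP K d] (g : P) (c : K) :
    groupMurrayElement K pa pb (d - 2) ≠ .single g c := by
  have hd : d.Prime := Fact.out
  obtain rfl | hd2 := eq_or_ne d 2
  · have : Nontrivial K := CharP.nontrivial_of_char_ne_one hd.ne_one
    exact groupMurrayElement_ne_single_of_two_eq_zero K CharTwo.two_eq_zero g c
  · have odd : Odd d := hd.odd_of_ne_two hd2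
    obtain ⟨n, rfl⟩ := Nat.exists_eq_add_of_le' (hd.two_le.lt_of_ne' hd2)
    refine groupMurrayElement_ne_single_of_two_pow_ne_zero K n (fun h => ?_) g c
    have dvd : n + 3 ∣ 2 ^ (n + 2) := (CharP.cast_eq_zero_iff K (n + 3) _).1 (by exact_mod_cast h)
    exact hd.ne_one (Nat.Coprime.eq_one_of_dvd (odd.coprime_two_right.pow_right _) dvd)

end DihedralQuotients

theorem finite_field_nontrivial_units_general (K : Type*) [Ring K] (d : ℕ) [Fact d.Prime]
    [CharP K d] :
    ∃ u : (MonoidAlgebra K P)ˣ, ¬∃ (c : Kˣ) (g : P),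
      (u : MonoidAlgebra K P) = MonoidAlgebra.single g (c : K) := by
  let _ := ZMod.algebra K d
  obtain ⟨u, hu⟩ := (isPromislowPair_pa_pb.map (groupUnit K P)).isUnit_murrayElement d
  refine ⟨u, ?_⟩
  rintro ⟨c, g, trivial⟩
  exact groupMurrayElement_ne_single K d g c (hu.symm.trans trivial)

/-- For every prime `p`, the group ring `F_{p²}[P]` contains a non-trivial unit; moreover,
if `p = 2` or `p ≡ 1 (mod 8)`, the group ring `F_p[P]` contains a non-trivial unit. -/
theorem finite_field_nontrivial_units (p : ℕ) [Fact p.Prime] :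
    (∃ u : (MonoidAlgebra (GaloisField p 2) P)ˣ,
      ¬∃ (c : (GaloisField p 2)ˣ) (g : P),
        (u : MonoidAlgebra (GaloisField p 2) P) = MonoidAlgebra.single g (c : GaloisField p 2)) ∧
    ((p = 2 ∨ p % 8 = 1) →
      ∃ u : (MonoidAlgebra (ZMod p) P)ˣ,
        ¬∃ (c : (ZMod p)ˣ) (g : P),
          (u : MonoidAlgebra (ZMod p) P) = MonoidAlgebra.single g (c : ZMod p)) :=
  ⟨finite_field_nontrivial_units_general (GaloisField p 2) p,
    fun _ => finite_field_nontrivial_units_general (ZMod p) p⟩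
end
end

section
/- The group P is torsion-free: every element of P of finite order is the identity. -/
noncomputable section

/-!
The squares `x = a²`, `y = b²`, `z = (ab)²` are each fixed or inverted under conjugation by `a` and
`b`, so they generate normal cyclic subgroups. Modulo the three of them `a` and `b` become commuting
involutions, hence every element of `P` is `xⁱ yʲ zᵏ c` with `c ∈ {1, a, b, ab}`.

`P` acts on `ℝ³` with `a`, `b` and `ab` acting as screw motions in the three coordinate directions.
Each coordinate gives a homomorphism from `P` to the infinite dihedral group, in which the
corresponding screw motion is the unit translation while the other two are reflections. If `c ≠ 1`,
then one of the three homomorphisms sends `xⁱ yʲ zᵏ c` to a translation by an odd integer, which has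
infinite order. If `c = 1`, then the three images are the translations by `2i`, `2j` and `2k`, which
all have finite order only for `i = j = k = 0`.
-/

open DihedralGroup Subgroup

section Group

variable {G : Type*} [Group G] {a b t x y : G}

theorem inv_mul_mul_mul_eq_one_iff_semiconjBy_inv :
    t⁻¹ * x * t * x = 1 ↔ SemiconjBy t x x⁻¹ := by
  rw [mul_eq_one_iff_eq_inv, mul_assoc, inv_mul_eq_iff_eq_mul, ← SemiconjBy.inv_right_iff, inv_inv]
  exact eq_comm

theorem mem_normalizer_zpowers_of_semiconjBy (h : SemiconjBy t x y) (hxy : zpowers y = zpowers x) :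
    t ∈ normalizer (zpowers x : Set G) := by
  rw [mem_normalizer_iff_map_conj_eq, MonoidHom.map_zpowers, MonoidHom.coe_coe,
    MulAut.conj_apply, h.eq, mul_inv_cancel_right, hxy]

theorem normal_of_subset_normalizer_of_closure_eq_top {H : Subgroup G} {S : Set G}
    (hgen : closure S = ⊤) (hS : S ⊆ normalizer (H : Set G)) : H.Normal := by
  rwa [← normalizer_eq_top_iff, eq_top_iff, ← hgen, closure_le]

theorem mem_insert_of_closure_pair_eq_top_of_sq_eq_one (hgen : closure {a, b} = ⊤)
    (ha : a ^ 2 = 1) (hb : b ^ 2 = 1) (hab : (a * b) ^ 2 = 1) (g : G) :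
    g ∈ ({1, a, b, a * b} : Set G) := by
  have inv_a : a⁻¹ = a := inv_eq_of_mul_eq_one_left (by rw [← sq, ha])
  have inv_b : b⁻¹ = b := inv_eq_of_mul_eq_one_left (by rw [← sq, hb])
  have comm : b * a = a * b := by
    rw [← inv_a, ← inv_b, ← mul_inv_rev, inv_a, inv_b]
    exact inv_eq_of_mul_eq_one_left (by rw [← sq, hab])
  have a_mul_a_mul (h : G) : a * (a * h) = h := by rw [← mul_assoc, ← sq, ha, one_mul]
  have b_mul_a_mul (h : G) : b * (a * h) = a * (b * h) := by rw [← mul_assoc, comm, mul_assoc]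
  have mul_left (s h : G) (hs : s = a ∨ s = b) (hh : h ∈ ({1, a, b, a * b} : Set G)) :
      s * h ∈ ({1, a, b, a * b} : Set G) := by
    rcases hs with rfl | rfl <;> rcases hh with rfl | rfl | rfl | rfl <;> simp [← sq, *]
  have hg : g ∈ closure {a, b} := hgen ▸ mem_top g
  induction hg using closure_induction_left with
  | one => simp
  | mul_left s hs h _ ih => exact mul_left s h hs ih
  | inv_mul_cancel s hs h _ ih =>
    have inv_s : s⁻¹ = s := by rcases hs with rfl | rfl <;> assumption
    rw [inv_s]
    exact mul_left s h hs ih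

theorem exists_mem_mul_eq_of_sq_mem {N : Subgroup G} [N.Normal] (hgen : closure {a, b} = ⊤)
    (ha : a ^ 2 ∈ N) (hb : b ^ 2 ∈ N) (hab : (a * b) ^ 2 ∈ N) (g : G) :
    ∃ n ∈ N, ∃ c ∈ ({1, a, b, a * b} : Set G), n * c = g := by
  let π := QuotientGroup.mk' N
  have hπ {n : G} (hn : n ∈ N) : π n = 1 := (QuotientGroup.eq_one_iff n).2 hn
  have hgenπ : closure {π a, π b} = ⊤ := by
    rw [← Set.image_pair, ← MonoidHom.map_closure, hgen,
      map_top_of_surjective π (QuotientGroup.mk'_surjective N)]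
  obtain ⟨c, hc, hcg⟩ : ∃ c ∈ ({1, a, b, a * b} : Set G), π c = π g := by
    simpa [eq_comm] using mem_insert_of_closure_pair_eq_top_of_sq_eq_one hgenπ
      (by rw [← map_pow, hπ ha]) (by rw [← map_pow, hπ hb])
      (by rw [← map_mul, ← map_pow, hπ hab]) (π g)
  refine ⟨g * c⁻¹, ?_, c, hc, inv_mul_cancel_right g c⟩
  rw [← QuotientGroup.eq_one_iff]
  exact (map_mul_inv π g c).trans (by rw [hcg, mul_inv_cancel])

theorem eq_zero_of_isOfFinOrder_zpow (hx : ¬ IsOfFinOrder x) {m : ℤ} (h : IsOfFinOrder (x ^ m)) :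
    m = 0 := by
  obtain ⟨n, hn, hxn⟩ := isOfFinOrder_iff_zpow_eq_one.1 h
  rw [← zpow_mul] at hxn
  by_contra hm
  exact hx (isOfFinOrder_iff_zpow_eq_one.2 ⟨m * n, mul_ne_zero hm hn, hxn⟩)

theorem semiconjBy_left_mul_sq (hba : SemiconjBy b (a ^ 2) (a ^ 2)⁻¹)
    (hab : SemiconjBy a (b ^ 2) (b ^ 2)⁻¹) :
    SemiconjBy a ((a * b) ^ 2) ((a * b) ^ 2)⁻¹ := by
  have sq_mul : b ^ 2 * a = a * (b ^ 2)⁻¹ := by simpa using hab.inv_right.eq.symm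
  rw [SemiconjBy, eq_inv_mul_iff_mul_eq]
  calc (a * b) ^ 2 * (a * (a * b) ^ 2)
      = a * b * a * (b * a ^ 2) * b * a * b := by simp only [sq, mul_assoc]
    _ = a * b * a⁻¹ * (b ^ 2 * a) * b := by rw [hba.eq]; simp only [sq]; group
    _ = a := by rw [sq_mul]; group

theorem semiconjBy_right_mul_sq (hba : SemiconjBy b (a ^ 2) (a ^ 2)⁻¹)
    (hab : SemiconjBy a (b ^ 2) (b ^ 2)⁻¹) :
    SemiconjBy b ((a * b) ^ 2) ((a * b) ^ 2)⁻¹ := by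
  have h : SemiconjBy a⁻¹ ((a * b) ^ 2) ((a * b) ^ 2)⁻¹ := by
    simpa using (semiconjBy_left_mul_sq hba hab).inv_right
  simpa using h.mul_left ((Commute.refl (a * b)).pow_right 2)

theorem exists_zpow_mul_zpow_mul_zpow_mul_eq (hba : SemiconjBy b (a ^ 2) (a ^ 2)⁻¹)
    (hab : SemiconjBy a (b ^ 2) (b ^ 2)⁻¹)
    (hgen : closure {a, b} = ⊤) (g : G) :
    ∃ i j k : ℤ, ∃ c ∈ ({1, a, b, a * b} : Set G),
      (a ^ 2) ^ i * (b ^ 2) ^ j * ((a * b) ^ 2) ^ k * c = g := by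
  have normal_x : (zpowers (a ^ 2)).Normal :=
    normal_of_subset_normalizer_of_closure_eq_top hgen (Set.pair_subset
      (mem_normalizer_zpowers_of_semiconjBy ((Commute.refl a).pow_right 2) rfl)
      (mem_normalizer_zpowers_of_semiconjBy hba zpowers_inv))
  have normal_y : (zpowers (b ^ 2)).Normal :=
    normal_of_subset_normalizer_of_closure_eq_top hgen (Set.pair_subset
      (mem_normalizer_zpowers_of_semiconjBy hab zpowers_inv)
      (mem_normalizer_zpowers_of_semiconjBy ((Commute.refl b).pow_right 2) rfl))
  have normal_z : (zpowers ((a * b) ^ 2)).Normal :=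
    normal_of_subset_normalizer_of_closure_eq_top hgen (Set.pair_subset
      (mem_normalizer_zpowers_of_semiconjBy (semiconjBy_left_mul_sq hba hab) zpowers_inv)
      (mem_normalizer_zpowers_of_semiconjBy (semiconjBy_right_mul_sq hba hab) zpowers_inv))
  obtain ⟨n, hn, c, hc, rfl⟩ := exists_mem_mul_eq_of_sq_mem
    (N := zpowers (a ^ 2) ⊔ zpowers (b ^ 2) ⊔ zpowers ((a * b) ^ 2)) hgen
    (mem_sup_left (mem_sup_left (mem_zpowers _))) (mem_sup_left (mem_sup_right (mem_zpowers _)))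
    (mem_sup_right (mem_zpowers _)) g
  obtain ⟨_, hxy, _, ⟨k, rfl⟩, rfl⟩ := mem_sup_of_normal_right.1 hn
  obtain ⟨_, ⟨i, rfl⟩, _, ⟨j, rfl⟩, rfl⟩ := mem_sup_of_normal_right.1 hxy
  exact ⟨i, j, k, c, hc, rfl⟩

end Group

section Dihedral

variable {n : ℕ}

theorem semiconjBy_sr_r_sq (i j : ZMod n) : SemiconjBy (sr i) (r j ^ 2) (r j ^ 2)⁻¹ := by
  simp [SemiconjBy]

theorem semiconjBy_sr_sq (g : DihedralGroup n) (i : ZMod n) :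
    SemiconjBy g (sr i ^ 2) (sr i ^ 2)⁻¹ := by
  simp [sq]

theorem eq_zero_of_isOfFinOrder_r_one_zpow {m : ℤ}
    (h : IsOfFinOrder ((r 1 : DihedralGroup 0) ^ m)) : m = 0 :=
  eq_zero_of_isOfFinOrder_zpow (orderOf_eq_zero_iff.1 orderOf_r_one) h

end Dihedral

namespace P

theorem semiconjBy_pb_px : SemiconjBy pb px px⁻¹ :=
  inv_mul_mul_mul_eq_one_iff_semiconjBy_inv.1
    (PresentedGroup.one_of_mem (rels := Prels) (Set.mem_insert _ _))

theorem semiconjBy_pa_py : SemiconjBy pa py py⁻¹ :=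
  inv_mul_mul_mul_eq_one_iff_semiconjBy_inv.1
    (PresentedGroup.one_of_mem (rels := Prels) (Set.mem_insert_of_mem _ rfl))

theorem closure_pa_pb : closure {pa, pb} = ⊤ := by
  rw [← PresentedGroup.closure_range_of Prels]
  congr 1
  ext g
  simp [Fin.exists_fin_two, pa, pb, eq_comm]

theorem exists_zpow_mul_eq (g : P) :
    ∃ i j k : ℤ, ∃ c ∈ ({1, pa, pb, pa * pb} : Set P), px ^ i * py ^ j * pz ^ k * c = g :=
  exists_zpow_mul_zpow_mul_zpow_mul_eq semiconjBy_pb_px semiconjBy_pa_py closure_pa_pb g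

section Lift

variable {H : Type*} [Group H] {A B : H} (hBA : SemiconjBy B (A ^ 2) (A ^ 2)⁻¹)
  (hAB : SemiconjBy A (B ^ 2) (B ^ 2)⁻¹)

/-- The universal property of `P`: the homomorphism that sends the generators `pa` and `pb` to
elements `A` and `B` satisfying the defining relations. The relations are stated in the form in
which `semiconjBy_pb_px` and `semiconjBy_pa_py` give them for `pa` and `pb`. -/
def lift : P →* H :=
  PresentedGroup.toGroup (f := ![A, B]) (by
    rintro r (rfl | rfl)
    · simpa using inv_mul_mul_mul_eq_one_iff_semiconjBy_inv.2 hBA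
    · simpa using inv_mul_mul_mul_eq_one_iff_semiconjBy_inv.2 hAB)

@[simp]
theorem lift_pa : lift hBA hAB pa = A := PresentedGroup.toGroup.of _

@[simp]
theorem lift_pb : lift hBA hAB pb = B := PresentedGroup.toGroup.of _

end Lift

/-- The action of `P` on the coordinate in the direction of the screw motion `pa`, as a homomorphism
to the infinite dihedral group: `r m` is the translation by `m` and `sr m` is a reflection. -/
def xCoord : P →* DihedralGroup 0 :=
  lift (semiconjBy_sr_r_sq 0 1) (semiconjBy_sr_sq (r 1) 0)

/-- The action of `P` on the coordinate in the direction of the screw motion `pb`, encoded as in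
`xCoord`. -/
def yCoord : P →* DihedralGroup 0 :=
  lift (semiconjBy_sr_sq (r 1) 0) (semiconjBy_sr_r_sq 0 1)

/-- The action of `P` on the coordinate in the direction of the screw motion `pa * pb`, encoded as
in `xCoord`. The reflections `pa` and `pb` are in distinct points, so that their product is the unit
translation `r 1`. -/
def zCoord : P →* DihedralGroup 0 :=
  lift (semiconjBy_sr_sq (sr 1) 0) (semiconjBy_sr_sq (sr 0) 1)

theorem xCoord_zpow_mul (i j k : ℤ) (c : P) :
    xCoord (px ^ i * py ^ j * pz ^ k * c) = r 1 ^ (2 * i) * xCoord c := by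
  simp [xCoord, px, py, pz, sq, one_add_one_eq_two]

theorem yCoord_zpow_mul (i j k : ℤ) (c : P) :
    yCoord (px ^ i * py ^ j * pz ^ k * c) = r 1 ^ (2 * j) * yCoord c := by
  simp [yCoord, px, py, pz, sq, one_add_one_eq_two]

theorem zCoord_zpow_mul (i j k : ℤ) (c : P) :
    zCoord (px ^ i * py ^ j * pz ^ k * c) = r 1 ^ (2 * k) * zCoord c := by
  simp [zCoord, px, py, pz, sq, one_add_one_eq_two]

theorem xCoord_pa : xCoord pa = r 1 := lift_pa _ _

theorem yCoord_pb : yCoord pb = r 1 := lift_pb _ _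

theorem zCoord_pa_mul_pb : zCoord (pa * pb) = r 1 := by simp [zCoord]

end P

/-- The group `P` is torsion-free: every element of finite order is the identity. -/
theorem P_torsion_free : ∀ g : P, IsOfFinOrder g → g = 1 := by
  intro g hg
  obtain ⟨i, j, k, c, hc, rfl⟩ := P.exists_zpow_mul_eq g
  have hx := P.xCoord_zpow_mul i j k c ▸ P.xCoord.isOfFinOrder hg
  have hy := P.yCoord_zpow_mul i j k c ▸ P.yCoord.isOfFinOrder hg
  have hz := P.zCoord_zpow_mul i j k c ▸ P.zCoord.isOfFinOrder hg
  rcases hc with rfl | rfl | rfl | rfl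
  · rw [map_one, mul_one] at hx hy hz
    obtain rfl : i = 0 := by linarith [eq_zero_of_isOfFinOrder_r_one_zpow hx]
    obtain rfl : j = 0 := by linarith [eq_zero_of_isOfFinOrder_r_one_zpow hy]
    obtain rfl : k = 0 := by linarith [eq_zero_of_isOfFinOrder_r_one_zpow hz]
    simp
  · rw [P.xCoord_pa, ← zpow_add_one] at hx
    exact absurd (eq_zero_of_isOfFinOrder_r_one_zpow hx) (by omega)
  · rw [P.yCoord_pb, ← zpow_add_one] at hy
    exact absurd (eq_zero_of_isOfFinOrder_r_one_zpow hy) (by omega)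
  · rw [P.zCoord_pa_mul_pb, ← zpow_add_one] at hz
    exact absurd (eq_zero_of_isOfFinOrder_r_one_zpow hz) (by omega)
end
end

section
/- The abelianization of P is isomorphic to ℤ/4ℤ × ℤ/4ℤ. -/
noncomputable section

/-! In a commutative group the relators `b⁻¹a²ba²` and `a⁻¹b²ab²` collapse to `a⁴` and `b⁴`, so the
abelianization of `P` is the commutative group generated by `a` and `b` subject only to
`a⁴ = b⁴ = 1`. -/

open Multiplicative (ofAdd)

section ZModProd

variable {G : Type*} [CommGroup G] {m n : ℕ}

/-- The homomorphism `ℤ/m × ℤ/n → G` sending the standard generators to elements `x` and `y` of a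
commutative group with `x ^ m = 1` and `y ^ n = 1`. -/
def zmodProdLift (x y : G) (hx : x ^ m = 1) (hy : y ^ n = 1) :
    Multiplicative (ZMod m × ZMod n) →* G :=
  AddMonoidHom.toMultiplicativeLeft <| AddMonoidHom.coprod
    (ZMod.lift m ⟨zmultiplesHom _ (Additive.ofMul x), by simp [← ofMul_pow, hx]⟩)
    (ZMod.lift n ⟨zmultiplesHom _ (Additive.ofMul y), by simp [← ofMul_pow, hy]⟩)

theorem zmodProdLift_ofAdd_intCast (x y : G) (hx : x ^ m = 1) (hy : y ^ n = 1) (i j : ℤ) :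
    zmodProdLift x y hx hy (ofAdd ((i : ZMod m), (j : ZMod n))) = x ^ i * y ^ j := by
  simp [zmodProdLift]

theorem zmodProdLift_ofAdd_one_zero (x y : G) (hx : x ^ m = 1) (hy : y ^ n = 1) :
    zmodProdLift x y hx hy (ofAdd (1, 0)) = x := by
  simpa using zmodProdLift_ofAdd_intCast x y hx hy 1 0

theorem zmodProdLift_ofAdd_zero_one (x y : G) (hx : x ^ m = 1) (hy : y ^ n = 1) :
    zmodProdLift x y hx hy (ofAdd (0, 1)) = y := by
  simpa using zmodProdLift_ofAdd_intCast x y hx hy 0 1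

end ZModProd

theorem closure_ofAdd_one_zero_ofAdd_zero_one (m n : ℕ) :
    Subgroup.closure {ofAdd ((1, 0) : ZMod m × ZMod n), ofAdd (0, 1)} = ⊤ := by
  refine eq_top_iff.2 fun g _ ↦ Subgroup.mem_closure_pair.2 ?_
  obtain ⟨i, hi⟩ := ZMod.intCast_surjective g.toAdd.1
  obtain ⟨j, hj⟩ := ZMod.intCast_surjective g.toAdd.2
  refine ⟨i, j, Multiplicative.toAdd.injective (Prod.ext ?_ ?_)⟩ <;> simp [hi, hj]

theorem lift_abelianization_of_eq_one {α : Type*} {rels : Set (FreeGroup α)} {r : FreeGroup α}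
    (hr : r ∈ rels) :
    FreeGroup.lift (fun i ↦ Abelianization.of (PresentedGroup.of (rels := rels) i)) r = 1 := by
  have lift_eq : FreeGroup.lift (fun i ↦ Abelianization.of (PresentedGroup.of (rels := rels) i)) =
      Abelianization.of.comp (PresentedGroup.mk rels) := by
    ext i
    simp [PresentedGroup.of]
  rw [lift_eq, MonoidHom.comp_apply, PresentedGroup.one_of_mem hr, map_one]

theorem forall_mem_Prels_lift_eq_one_iff {G : Type*} [CommGroup G] (f : Fin 2 → G) :
    (∀ r ∈ Prels, FreeGroup.lift f r = 1) ↔ f 0 ^ 4 = 1 ∧ f 1 ^ 4 = 1 := by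
  simp only [Prels, Set.forall_mem_insert, Set.mem_singleton_iff, forall_eq, map_mul, map_inv,
    map_pow, FreeGroup.lift_apply_of, inv_mul_cancel_comm, ← pow_add, Nat.reduceAdd]

theorem abelianization_of_pa_pow_four : Abelianization.of pa ^ 4 = 1 :=
  ((forall_mem_Prels_lift_eq_one_iff _).1 fun _ ↦ lift_abelianization_of_eq_one).1

theorem abelianization_of_pb_pow_four : Abelianization.of pb ^ 4 = 1 :=
  ((forall_mem_Prels_lift_eq_one_iff _).1 fun _ ↦ lift_abelianization_of_eq_one).2

/-- The homomorphism from the abelianization of `P` to `ℤ/4 × ℤ/4` sending the classes of `a` and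
`b` to the standard generators. -/
def abelianizationToZMod : Abelianization P →* Multiplicative (ZMod 4 × ZMod 4) :=
  Abelianization.lift <| PresentedGroup.toGroup (f := ![ofAdd (1, 0), ofAdd (0, 1)]) <|
    (forall_mem_Prels_lift_eq_one_iff _).2 (by decide)

theorem abelianizationToZMod_of_pa : abelianizationToZMod (.of pa) = ofAdd (1, 0) := by
  simp [abelianizationToZMod, pa]

theorem abelianizationToZMod_of_pb : abelianizationToZMod (.of pb) = ofAdd (0, 1) := by
  simp [abelianizationToZMod, pb]

/-- The homomorphism from `ℤ/4 × ℤ/4` to the abelianization of `P` sending the standard generators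
to the classes of `a` and `b`; it is the inverse of `abelianizationToZMod`. -/
def zmodToAbelianization : Multiplicative (ZMod 4 × ZMod 4) →* Abelianization P :=
  zmodProdLift (.of pa) (.of pb) abelianization_of_pa_pow_four abelianization_of_pb_pow_four

theorem zmodToAbelianization_ofAdd_one_zero :
    zmodToAbelianization (ofAdd (1, 0)) = .of pa :=
  zmodProdLift_ofAdd_one_zero ..

theorem zmodToAbelianization_ofAdd_zero_one :
    zmodToAbelianization (ofAdd (0, 1)) = .of pb :=
  zmodProdLift_ofAdd_zero_one ..

theorem zmodToAbelianization_comp_abelianizationToZMod :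
    zmodToAbelianization.comp abelianizationToZMod = MonoidHom.id _ := by
  refine Abelianization.hom_ext _ _ (PresentedGroup.ext (Fin.forall_fin_two.2 ⟨?_, ?_⟩))
  · change zmodToAbelianization (abelianizationToZMod (.of pa)) = .of pa
    rw [abelianizationToZMod_of_pa, zmodToAbelianization_ofAdd_one_zero]
  · change zmodToAbelianization (abelianizationToZMod (.of pb)) = .of pb
    rw [abelianizationToZMod_of_pb, zmodToAbelianization_ofAdd_zero_one]

theorem abelianizationToZMod_comp_zmodToAbelianization :
    abelianizationToZMod.comp zmodToAbelianization = MonoidHom.id _ := by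
  refine MonoidHom.eq_of_eqOn_dense (closure_ofAdd_one_zero_ofAdd_zero_one 4 4) ?_
  rintro _ (rfl | rfl)
  · rw [MonoidHom.comp_apply, zmodToAbelianization_ofAdd_one_zero, abelianizationToZMod_of_pa,
      MonoidHom.id_apply]
  · rw [MonoidHom.comp_apply, zmodToAbelianization_ofAdd_zero_one, abelianizationToZMod_of_pb,
      MonoidHom.id_apply]

/-- The abelianization of `P` is isomorphic to `ℤ/4ℤ × ℤ/4ℤ`. -/
theorem abelianization_P :
    Nonempty (Abelianization P ≃* Multiplicative (ZMod 4 × ZMod 4)) :=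
  ⟨abelianizationToZMod.toMulEquiv zmodToAbelianization
    zmodToAbelianization_comp_abelianizationToZMod abelianizationToZMod_comp_zmodToAbelianization⟩
end
end

section
/- Let φ₁ : P → P be the automorphism determined by a ↦ a, b ↦ b⁻¹, let χ₁ : P → Rˣ be the group homomorphism determined by a ↦ s², b ↦ −1, let θ₁ be the R-algebra automorphism of R[P] determined by θ₁(Σ_g λ_g·g) = Σ_g χ₁(g)·λ_g·φ₁(g), and let * : R[P] → R[P] be the R-linear anti-involution extending g ↦ g⁻¹. Then θ₁(α)* = β; in particular, since β = α⁻¹, the unit α is θ₁-unitary. -/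
open MvPolynomial

noncomputable section

/-- The ring `R = ℤ[s,t]/⟨s⁴+1, t⁴+1⟩`. -/
abbrev Rr : Type :=
  MvPolynomial (Fin 2) ℤ ⧸
    Ideal.span {(X 0 : MvPolynomial (Fin 2) ℤ) ^ 4 + 1, (X 1 : MvPolynomial (Fin 2) ℤ) ^ 4 + 1}

def s : Rr := Ideal.Quotient.mk _ (X 0)
def t : Rr := Ideal.Quotient.mk _ (X 1)

/-- The image of a group element in the group ring `R[P]`. -/
def G (g : P) : MonoidAlgebra Rr P := MonoidAlgebra.of Rr P g

def α1 : MonoidAlgebra Rr P :=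
  1 + t ^ 2 • G (px * pz⁻¹) - t ^ 2 • G (px⁻¹ * pz⁻¹) - s ^ 2 • G (py * pz⁻¹)
    + s ^ 2 • G (py⁻¹ * pz⁻¹)

def αa : MonoidAlgebra Rr P :=
  -(s ^ 2 • G px⁻¹) + 1 - G (px⁻¹ * py⁻¹ * pz) + s ^ 2 • G (py * pz)

def αb : MonoidAlgebra Rr P :=
  G (px⁻¹ * py⁻¹ * pz) - t ^ 2 • G (px * pz) + t ^ 2 • G (py⁻¹ * pz ^ 2) - G (pz ^ 2)

def αab : MonoidAlgebra Rr P :=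
  -(t ^ 2 • G (px⁻¹ * pz⁻¹)) - s ^ 2 • G (py * pz⁻¹) + (s ^ 2 * t ^ 2) • G pz⁻¹
    + G (px⁻¹ * py * pz⁻¹) + s ^ 2 • G (px⁻¹ * pz⁻¹ ^ 2) + t ^ 2 • G (py * pz⁻¹ ^ 2)
    - G (pz⁻¹ ^ 2) - (s ^ 2 * t ^ 2) • G (px⁻¹ * py * pz⁻¹ ^ 2)

/-- The unit `α ∈ R[P]`. -/
def αU : MonoidAlgebra Rr P :=
  α1 + s • (αa * G pa) + t • (αb * G pb) + (s * t) • (αab * G (pa * pb))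

def β1 : MonoidAlgebra Rr P :=
  1 + t ^ 2 • G (px⁻¹ * pz) - t ^ 2 • G (px * pz) + s ^ 2 • G (py * pz) - s ^ 2 • G (py⁻¹ * pz)

def βa : MonoidAlgebra Rr P :=
  -1 + s ^ 2 • G px⁻¹ - s ^ 2 • G (py * pz) + G (px⁻¹ * py⁻¹ * pz)

def βb : MonoidAlgebra Rr P :=
  -G (px⁻¹ * py⁻¹ * pz) + t ^ 2 • G (px * pz) - t ^ 2 • G (py⁻¹ * pz ^ 2) + G (pz ^ 2)

def βab : MonoidAlgebra Rr P :=
  (s ^ 2 * t ^ 2) • G (px⁻¹ * py) + 1 - t ^ 2 • G py - s ^ 2 • G px⁻¹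
    - G (px⁻¹ * py * pz) - (s ^ 2 * t ^ 2) • G pz + s ^ 2 • G (py * pz) + t ^ 2 • G (px⁻¹ * pz)

/-- The inverse unit `β ∈ R[P]`. -/
def βU : MonoidAlgebra Rr P :=
  β1 + s • (βa * G pa) + t • (βb * G pb) + (s * t) • (βab * G (pa * pb))

/-!
The squares `x = a²`, `y = b²`, `z = (ab)²` commute, and each of `a`, `b`, `ab` conjugates each
of them to itself or to its inverse. Since `1`, `a`, `b`, `ab` represent the cosets of `⟨x, y, z⟩`,
every element of `k[P]` is `p + q·a + r·b + w·ab` with Laurent polynomials `p, q, r, w` in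
`x, y, z`. In these coordinates a product, and likewise the map `c ↦ θ₁(c)*`, is given by sign
changes of the exponents, signs, and monomial factors, so all three claims become identities between
Laurent polynomials, which hold as soon as `s⁴ = t⁴ = -1`.
-/

namespace Promislow

open scoped MonoidAlgebra
open MonoidAlgebra (of single mapDomainAlgHom)

section GroupRing

variable {k : Type*} [CommSemiring k]

section Monoid

variable {Γ Δ : Type*} [Monoid Γ] [Monoid Δ]

/-- The algebra homomorphism `Σ λ_g g ↦ Σ χ(g) λ_g φ(g)` of monoid algebras. -/
def twist (φ : Γ →* Δ) (χ : Γ →* kˣ) : k[Γ] →ₐ[k] k[Δ] :=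
  MonoidAlgebra.lift k k[Δ] Γ
    { toFun g := single (φ g) (χ g : k)
      map_one' := by simp [MonoidAlgebra.one_def]
      map_mul' g h := by simp }

@[simp]
theorem twist_single (φ : Γ →* Δ) (χ : Γ →* kˣ) (g : Γ) (r : k) :
    twist φ χ (single g r) = single (φ g) (χ g * r) := by
  simp [twist, mul_comm]

/-- The twist by a multiplicative equivalence, with inverse the twist by `φ⁻¹` and `(χ ∘ φ⁻¹)⁻¹`. -/
def twistEquiv (φ : Γ ≃* Δ) (χ : Γ →* kˣ) : k[Γ] ≃ₐ[k] k[Δ] :=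
  AlgEquiv.ofAlgHom (twist φ χ) (twist φ.symm (χ.comp φ.symm.toMonoidHom)⁻¹)
    (by ext; simp) (by ext; simp)

variable {Λ : Type*} [Monoid Λ] (ι : Λ →* Γ)

theorem semiconjBy_of_mapDomain {g : Γ} {σ : Λ →* Λ} (h : ∀ l, SemiconjBy g (ι l) (ι (σ l)))
    (c : k[Λ]) :
    SemiconjBy (of k Γ g) (mapDomainAlgHom k k ι c)
      (mapDomainAlgHom k k ι (mapDomainAlgHom k k σ c)) := by
  induction c using MonoidAlgebra.induction_linear with
  | zero => simp
  | add c d hc hd => simpa only [map_add] using hc.add_right hd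
  | single l r => simp [SemiconjBy, (h l).eq]

theorem coset_mul_mapDomain {u : Γ} {σ : Λ →* Λ} (hu : ∀ l, SemiconjBy u (ι l) (ι (σ l)))
    (c d : k[Λ]) :
    mapDomainAlgHom k k ι c * of k Γ u * mapDomainAlgHom k k ι d =
      mapDomainAlgHom k k ι (c * mapDomainAlgHom k k σ d) * of k Γ u := by
  rw [mul_assoc, (semiconjBy_of_mapDomain ι hu d).eq, map_mul, mul_assoc]

end Monoid

variable {Γ Δ Λ : Type*} [Group Γ] [Group Δ]

/-- A group element as a unit of the group ring. -/
def unitOf : Γ →* k[Γ]ˣ := (Units.map (of k Γ)).comp (toUnits (G := Γ)).toMonoidHom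

theorem val_unitOf (g : Γ) : (unitOf g : k[Γ]ˣ).val = of k Γ g := rfl

theorem map_twist_unitOf (φ : Γ →* Δ) (χ : Γ →* kˣ) (g : Γ) :
    Units.map (twist φ χ : k[Γ] →* k[Δ]) (unitOf g) =
      Units.map (algebraMap k k[Δ] : k →* k[Δ]) (χ g) * unitOf (φ g) := by
  ext1
  simp [val_unitOf, MonoidAlgebra.single_mul_single]

theorem map_mapDomain_unitOf (f : Γ →* Δ) (g : Γ) :
    Units.map (mapDomainAlgHom k k f : k[Γ] →* k[Δ]) (unitOf g) = unitOf (f g) := by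
  ext1
  simp [val_unitOf]

theorem coset_mul_coset [Group Λ] (ι : Λ →* Γ) {u v w : Γ} {m : Λ} {σ : Λ →* Λ}
    (hu : ∀ l, SemiconjBy u (ι l) (ι (σ l))) (huv : u * v = ι m * w) (c d : k[Λ]) :
    mapDomainAlgHom k k ι c * of k Γ u * (mapDomainAlgHom k k ι d * of k Γ v) =
      mapDomainAlgHom k k ι (c * mapDomainAlgHom k k σ d * (unitOf m : k[Λ]ˣ)) * of k Γ w := by
  have hm : mapDomainAlgHom k k ι (unitOf m : k[Λ]ˣ) = of k Γ (ι m) := by simp [val_unitOf]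
  rw [← mul_assoc, coset_mul_mapDomain ι hu, mul_assoc, ← map_mul (of k Γ), huv,
    map_mul _ _ (unitOf m : k[Λ]ˣ).val, hm, map_mul (of k Γ), mul_assoc]

theorem antipode_twist_coset [CommGroup Λ] (ι : Λ →* Γ) {φ : Γ →* Γ} {g : Γ} {m : Λ}
    {ρ : Λ →* Λ} (h : ∀ l, (φ (ι l * g))⁻¹ = ι (m * ρ l) * g) (χ : Γ →* kˣ) (c : k[Λ]) :
    HopfAlgebra.antipode k (twist φ χ (mapDomainAlgHom k k ι c * of k Γ g)) =
      mapDomainAlgHom k k ι ((χ g : k) • ((unitOf m : k[Λ]ˣ) * twist ρ (χ.comp ι) c)) *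
        of k Γ g := by
  induction c using MonoidAlgebra.induction_linear with
  | zero => simp
  | add c d hc hd => simp only [map_add, add_mul, mul_add, smul_add, hc, hd]
  | single l r =>
    have h_inv := h l
    simp only [map_mul, mul_inv_rev] at h_inv
    simp [MonoidAlgebra.single_mul_single, h_inv, val_unitOf, mul_comm, mul_left_comm]

end GroupRing

section Monomial

/-- The group of monomials in `x`, `y`, `z`: the free abelian group of rank three, written
multiplicatively, so that its group ring is the ring of Laurent polynomials. -/
abbrev Monomial : Type := Multiplicative ℤ × Multiplicative ℤ × Multiplicative ℤ

namespace Monomial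

/-- The first coordinate monomial. -/
def x : Monomial := (.ofAdd 1, 1, 1)

/-- The second coordinate monomial. -/
def y : Monomial := (1, .ofAdd 1, 1)

/-- The third coordinate monomial. -/
def z : Monomial := (1, 1, .ofAdd 1)

/-- The endomorphism `x ↦ xⁱ`, `y ↦ yʲ`, `z ↦ zᵏ`; conjugation in `P` acts on monomials by such
maps. -/
def scale (i j k : ℤ) : Monomial →* Monomial :=
  (zpowGroupHom i).prodMap ((zpowGroupHom j).prodMap (zpowGroupHom k))

@[simp]
theorem scale_x (i j k : ℤ) : scale i j k x = x ^ i := by simp [scale, x]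

@[simp]
theorem scale_y (i j k : ℤ) : scale i j k y = y ^ j := by simp [scale, y]

@[simp]
theorem scale_z (i j k : ℤ) : scale i j k z = z ^ k := by simp [scale, z]

theorem scale_scale (i j k i' j' k' : ℤ) (l : Monomial) :
    scale i j k (scale i' j' k' l) = scale (i' * i) (j' * j) (k' * k) l := by
  simp [scale, Prod.map, zpow_mul]

theorem scale_neg_one (l : Monomial) : scale (-1) (-1) (-1) l = l⁻¹ := by
  ext <;> simp [scale]

variable {Γ : Type*} [Group Γ]

/-- Evaluation of monomials at three commuting elements. -/
def lift (x y z : Γ) (hxy : Commute x y) (hxz : Commute x z) (hyz : Commute y z) :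
    Monomial →* Γ where
  toFun l := x ^ l.1.toAdd * (y ^ l.2.1.toAdd * z ^ l.2.2.toAdd)
  map_one' := by simp
  map_mul' l m := by
    have h : Commute (x ^ m.1.toAdd) (y ^ l.2.1.toAdd * z ^ l.2.2.toAdd) :=
      (hxy.zpow_zpow _ _).mul_right (hxz.zpow_zpow _ _)
    simp only [Prod.fst_mul, Prod.snd_mul, toAdd_mul, zpow_add]
    rw [h.symm.mul_mul_mul_comm, ((hyz.zpow_zpow _ _).symm).mul_mul_mul_comm]

variable {x y z : Γ} {hxy : Commute x y} {hxz : Commute x z} {hyz : Commute y z}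

@[simp]
theorem lift_x : lift x y z hxy hxz hyz Monomial.x = x := by
  simp [lift, Monomial.x]

@[simp]
theorem lift_y : lift x y z hxy hxz hyz Monomial.y = y := by
  simp [lift, Monomial.y]

@[simp]
theorem lift_z : lift x y z hxy hxz hyz Monomial.z = z := by
  simp [lift, Monomial.z]

theorem map_lift {f : Γ →* Γ} {i j k : ℤ} (hx : f x = x ^ i) (hy : f y = y ^ j)
    (hz : f z = z ^ k) (l : Monomial) :
    f (lift x y z hxy hxz hyz l) = lift x y z hxy hxz hyz (scale i j k l) := by
  simp [lift, scale, hx, hy, hz, ← zpow_mul]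

theorem semiconjBy_lift {g : Γ} {i j k : ℤ} (hx : SemiconjBy g x (x ^ i))
    (hy : SemiconjBy g y (y ^ j)) (hz : SemiconjBy g z (z ^ k)) (l : Monomial) :
    SemiconjBy g (lift x y z hxy hxz hyz l) (lift x y z hxy hxz hyz (scale i j k l)) := by
  have conj {u v : Γ} : MulAut.conj g u = v ↔ SemiconjBy g u v := by
    rw [MulAut.conj_apply, mul_inv_eq_iff_eq_mul, SemiconjBy]
  exact conj.1 (map_lift (f := (MulAut.conj g).toMonoidHom) (conj.2 hx) (conj.2 hy) (conj.2 hz) l)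

end Monomial

end Monomial

/-- The four coefficients of an element `p + q·a + r·b + w·ab` of a crossed product of `C` with the
Klein four-group. -/
@[ext]
structure Coeffs (C : Type*) where
  one : C
  a : C
  b : C
  ab : C

namespace Coeffs

variable {k C D : Type*}

/-- Apply a map to all four coefficients. -/
def map (f : C → D) (c : Coeffs C) : Coeffs D := ⟨f c.one, f c.a, f c.b, f c.ab⟩

/-- The coefficients of the product of `c` and `d`. Here `d_a`, `d_b`, `d_ab` are the conjugates of
`d` by `a`, `b`, `ab`, and the monomial factors come from the products of the coset representatives,
such as `b·a = x⁻¹yz⁻¹·ab`. -/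
def twistedMul [CommRing C] (x y z : Cˣ) (c d d_a d_b d_ab : Coeffs C) : Coeffs C where
  one := c.one * d.one + c.a * d_a.a * x + c.b * d_b.b * y + c.ab * d_ab.ab * z
  a := c.one * d.a + c.a * d_a.one + c.b * d_b.ab * (x⁻¹ * z⁻¹ : Cˣ)
    + c.ab * d_ab.b * (y⁻¹ : Cˣ)
  b := c.one * d.b + c.a * d_a.ab * x + c.b * d_b.one + c.ab * d_ab.a * (y⁻¹ * z : Cˣ)
  ab := c.one * d.ab + c.a * d_a.b + c.b * d_b.a * (x⁻¹ * y * z⁻¹ : Cˣ) + c.ab * d_ab.one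

section Ring

variable [CommRing k] [Ring C] [Ring D] [Algebra k C] [Algebra k D]

/-- The coefficients of `α`, the scalars `s`, `t`, `st` included, at arbitrary units. -/
def alpha (s t : k) (x y z : Cˣ) : Coeffs C where
  one := 1 + t ^ 2 • (x * z⁻¹ : Cˣ) - t ^ 2 • (x⁻¹ * z⁻¹ : Cˣ) - s ^ 2 • (y * z⁻¹ : Cˣ)
    + s ^ 2 • (y⁻¹ * z⁻¹ : Cˣ)
  a := s • (-(s ^ 2 • (x⁻¹ : Cˣ)) + 1 - (x⁻¹ * y⁻¹ * z : Cˣ) + s ^ 2 • (y * z : Cˣ))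
  b := t • ((x⁻¹ * y⁻¹ * z : Cˣ) - t ^ 2 • (x * z : Cˣ) + t ^ 2 • (y⁻¹ * z ^ 2 : Cˣ)
    - (z ^ 2 : Cˣ))
  ab := (s * t) • (-(t ^ 2 • (x⁻¹ * z⁻¹ : Cˣ)) - s ^ 2 • (y * z⁻¹ : Cˣ)
    + (s ^ 2 * t ^ 2) • (z⁻¹ : Cˣ) + (x⁻¹ * y * z⁻¹ : Cˣ) + s ^ 2 • (x⁻¹ * z⁻¹ ^ 2 : Cˣ)
    + t ^ 2 • (y * z⁻¹ ^ 2 : Cˣ) - (z⁻¹ ^ 2 : Cˣ)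
    - (s ^ 2 * t ^ 2) • (x⁻¹ * y * z⁻¹ ^ 2 : Cˣ))

/-- The coefficients of `β`, the scalars `s`, `t`, `st` included, at arbitrary units. -/
def beta (s t : k) (x y z : Cˣ) : Coeffs C where
  one := 1 + t ^ 2 • (x⁻¹ * z : Cˣ) - t ^ 2 • (x * z : Cˣ) + s ^ 2 • (y * z : Cˣ)
    - s ^ 2 • (y⁻¹ * z : Cˣ)
  a := s • (-1 + s ^ 2 • (x⁻¹ : Cˣ) - s ^ 2 • (y * z : Cˣ) + (x⁻¹ * y⁻¹ * z : Cˣ))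
  b := t • (-(x⁻¹ * y⁻¹ * z : Cˣ) + t ^ 2 • (x * z : Cˣ) - t ^ 2 • (y⁻¹ * z ^ 2 : Cˣ)
    + (z ^ 2 : Cˣ))
  ab := (s * t) • ((s ^ 2 * t ^ 2) • (x⁻¹ * y : Cˣ) + 1 - t ^ 2 • (y : C) - s ^ 2 • (x⁻¹ : Cˣ)
    - (x⁻¹ * y * z : Cˣ) - (s ^ 2 * t ^ 2) • (z : C) + s ^ 2 • (y * z : Cˣ)
    + t ^ 2 • (x⁻¹ * z : Cˣ))

theorem map_alpha (f : C →ₐ[k] D) (s t : k) (x y z : Cˣ) :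
    (alpha s t x y z).map f =
      alpha s t (Units.map (f : C →* D) x) (Units.map (f : C →* D) y)
        (Units.map (f : C →* D) z) := by
  ext <;> simp [map, alpha, ← map_inv]

theorem map_beta (f : C →ₐ[k] D) (s t : k) (x y z : Cˣ) :
    (beta s t x y z).map f =
      beta s t (Units.map (f : C →* D) x) (Units.map (f : C →* D) y)
        (Units.map (f : C →* D) z) := by
  ext <;> simp [map, beta, ← map_inv]

end Ring

variable [CommRing k] [CommRing C] [Algebra k C] {s t : k}

theorem alpha_twistedMul_beta (hs : s ^ 4 = -1) (ht : t ^ 4 = -1) (x y z : Cˣ) :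
    twistedMul x y z (alpha s t x y z) (beta s t x y z) (beta s t x y⁻¹ z⁻¹)
      (beta s t x⁻¹ y z⁻¹) (beta s t x⁻¹ y⁻¹ z) = ⟨1, 0, 0, 0⟩ := by
  replace hs := congrArg (algebraMap k C) hs
  replace ht := congrArg (algebraMap k C) ht
  -- With `x⁻¹`, `y⁻¹`, `z⁻¹` as new variables subject to `x x⁻¹ = 1`, …, all four components are
  -- polynomial identities modulo these relations and `s⁴ = t⁴ = -1`.
  obtain ⟨x, x', hx, -⟩ := x
  obtain ⟨y, y', hy, -⟩ := y
  obtain ⟨z, z', hz, -⟩ := z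
  ext <;> simp only [twistedMul, alpha, beta, Algebra.smul_def, map_mul, map_pow, map_neg, map_one,
    Units.val_mul, Units.val_pow_eq_pow_val, Units.inv_mk] at hs ht ⊢ <;> grind

theorem beta_twistedMul_alpha (hs : s ^ 4 = -1) (ht : t ^ 4 = -1) (x y z : Cˣ) :
    twistedMul x y z (beta s t x y z) (alpha s t x y z) (alpha s t x y⁻¹ z⁻¹)
      (alpha s t x⁻¹ y z⁻¹) (alpha s t x⁻¹ y⁻¹ z) = ⟨1, 0, 0, 0⟩ := by
  replace hs := congrArg (algebraMap k C) hs
  replace ht := congrArg (algebraMap k C) ht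
  obtain ⟨x, x', hx, -⟩ := x
  obtain ⟨y, y', hy, -⟩ := y
  obtain ⟨z, z', hz, -⟩ := z
  ext <;> simp only [twistedMul, alpha, beta, Algebra.smul_def, map_mul, map_pow, map_neg, map_one,
    Units.val_mul, Units.val_pow_eq_pow_val, Units.inv_mk] at hs ht ⊢ <;> grind

/-- The right-hand side lists the coefficients of `θ₁(α)*`. -/
theorem beta_eq_alpha (hs : s ^ 4 = -1) (x y z : Cˣ) :
    beta s t x y z =
      ⟨(alpha s t (-x⁻¹) y (-z⁻¹)).one,
        s ^ 2 • ((x⁻¹ : Cˣ) * (alpha s t (-x⁻¹) y⁻¹ (-z)).a),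
        -(alpha s t (-x) y (-z)).b,
        -(s ^ 2) • ((y * z⁻¹ : Cˣ) * (alpha s t (-x) y⁻¹ (-z⁻¹)).ab)⟩ := by
  replace hs := congrArg (algebraMap k C) hs
  obtain ⟨x, x', hx, -⟩ := x
  obtain ⟨y, y', hy, -⟩ := y
  obtain ⟨z, z', hz, -⟩ := z
  ext <;> simp only [alpha, beta, Algebra.smul_def, map_mul, map_pow, map_neg, map_one,
    Units.val_mul, Units.val_pow_eq_pow_val, Units.inv_mk, inv_neg, Units.val_neg]
    at hs ⊢ <;> grind

end Coeffs

section Presentation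

variable {H : Type*} [Group H] {u v : H}

theorem semiconjBy_inv_iff : SemiconjBy u v v⁻¹ ↔ u⁻¹ * v * u * v = 1 := by
  rw [← SemiconjBy.inv_right_iff, inv_inv, mul_eq_one_iff_eq_inv, SemiconjBy, mul_assoc,
    inv_mul_eq_iff_eq_mul, eq_comm]

theorem commute_sq_of_semiconjBy_inv (h : SemiconjBy u v v⁻¹) : Commute v (u ^ 2) := by
  have h_sq := h.inv_right.mul_left h
  rw [inv_inv, ← sq] at h_sq
  exact Commute.symm h_sq

/-- The pair `(u, v)` satisfies the defining relations of the Promislow group. -/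
structure IsPromislowPair (u v : H) : Prop where
  semiconjBy_sq_left : SemiconjBy v (u ^ 2) (u ^ 2)⁻¹
  semiconjBy_sq_right : SemiconjBy u (v ^ 2) (v ^ 2)⁻¹

theorem IsPromislowPair.inv_right (h : IsPromislowPair u v) : IsPromislowPair u v⁻¹ where
  semiconjBy_sq_left := by simpa using h.semiconjBy_sq_left.inv_right.inv_symm_left
  semiconjBy_sq_right := by simpa using h.semiconjBy_sq_right.inv_right

theorem isPromislowPair_pa_pb : IsPromislowPair pa pb where
  semiconjBy_sq_left := semiconjBy_inv_iff.2 <| PresentedGroup.one_of_mem <| Or.inl rfl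
  semiconjBy_sq_right := semiconjBy_inv_iff.2 <| PresentedGroup.one_of_mem <| Or.inr rfl

/-- The homomorphism `a ↦ u`, `b ↦ v` from `P`. -/
def lift (u v : H) (h : IsPromislowPair u v) : P →* H :=
  PresentedGroup.toGroup (f := ![u, v]) <| by
    rintro r (rfl | rfl)
    · simpa using semiconjBy_inv_iff.1 h.semiconjBy_sq_left
    · simpa using semiconjBy_inv_iff.1 h.semiconjBy_sq_right

@[simp]
theorem lift_pa {h : IsPromislowPair u v} : lift u v h pa = u := by simp [lift, pa]

@[simp]
theorem lift_pb {h : IsPromislowPair u v} : lift u v h pb = v := by simp [lift, pb]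

theorem hom_ext {f g : P →* H} (ha : f pa = g pa) (hb : f pb = g pb) : f = g :=
  PresentedGroup.ext fun i => by fin_cases i <;> assumption

end Presentation

section Relations

theorem semiconjBy_pb_px : SemiconjBy pb px px⁻¹ := isPromislowPair_pa_pb.semiconjBy_sq_left

theorem semiconjBy_pa_py : SemiconjBy pa py py⁻¹ := isPromislowPair_pa_pb.semiconjBy_sq_right

theorem semiconjBy_pa_px : SemiconjBy pa px px := (Commute.refl pa).pow_right 2

theorem semiconjBy_pb_py : SemiconjBy pb py py := (Commute.refl pb).pow_right 2

theorem semiconjBy_pab_px : SemiconjBy (pa * pb) px px⁻¹ :=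
  semiconjBy_pa_px.inv_right.mul_left semiconjBy_pb_px

theorem semiconjBy_pab_py : SemiconjBy (pa * pb) py py⁻¹ :=
  semiconjBy_pa_py.mul_left semiconjBy_pb_py

theorem semiconjBy_pab_pz : SemiconjBy (pa * pb) pz pz := (Commute.refl (pa * pb)).pow_right 2

theorem commute_px_py : Commute px py := commute_sq_of_semiconjBy_inv semiconjBy_pb_px

theorem commute_px_pz : Commute px pz := commute_sq_of_semiconjBy_inv semiconjBy_pab_px

theorem commute_py_pz : Commute py pz := commute_sq_of_semiconjBy_inv semiconjBy_pab_py

theorem inv_pz : pz⁻¹ = (pb * pa) ^ 2 := by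
  rw [inv_eq_iff_mul_eq_one]
  calc pz * (pb * pa) ^ 2 = pa * pb * (pa * py) * (pa * pb * pa) := by
        simp only [pz, py, sq, mul_assoc]
    _ = pa * pb * py⁻¹ * px * (pb * pa) := by
        rw [semiconjBy_pa_py.eq]; simp only [px, sq, mul_assoc]
    _ = py * (pa * pb * px) * (pb * pa) := by
        rw [semiconjBy_pab_py.inv_right.eq, inv_inv]; simp only [mul_assoc]
    _ = py * px⁻¹ * (pa * py) * pa := by
        rw [semiconjBy_pab_px.eq]; simp only [py, sq, mul_assoc]
    _ = py * px⁻¹ * py⁻¹ * px := by rw [semiconjBy_pa_py.eq]; simp only [px, sq, mul_assoc]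
    _ = 1 := by rw [commute_px_py.inv_left.symm.eq]; group

theorem semiconjBy_pa_pz : SemiconjBy pa pz pz⁻¹ := by
  rw [← SemiconjBy.inv_right_iff, inv_inv, inv_pz, pz]
  simp only [SemiconjBy, sq, mul_assoc]

theorem semiconjBy_pb_pz : SemiconjBy pb pz pz⁻¹ := by
  rw [inv_pz, pz]
  simp only [SemiconjBy, sq, mul_assoc]

theorem pa_mul_pa : pa * pa = px := (sq pa).symm

theorem pb_mul_pb : pb * pb = py := (sq pb).symm

theorem pab_mul_pab : pa * pb * (pa * pb) = pz := (sq (pa * pb)).symm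

theorem inv_pa : pa⁻¹ = px⁻¹ * pa := by simp [px, sq]

theorem inv_pb : pb⁻¹ = py⁻¹ * pb := by simp [py, sq]

theorem pa_mul_pab : pa * (pa * pb) = px * pb := by rw [← mul_assoc, pa_mul_pa]

theorem pab_mul_pb : pa * pb * pb = py⁻¹ * pa := by
  rw [mul_assoc, pb_mul_pb, semiconjBy_pa_py.eq]

theorem pab_mul_pa : pa * pb * pa = py⁻¹ * pz * pb := by
  calc pa * pb * pa = pz * pb⁻¹ := by simp [pz, sq, mul_assoc]
    _ = py⁻¹ * pz * pb := by rw [inv_pb, ← mul_assoc, commute_py_pz.inv_left.eq]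

theorem pb_mul_pab : pb * (pa * pb) = px⁻¹ * pz⁻¹ * pa := by
  calc pb * (pa * pb) = pz⁻¹ * pa⁻¹ := by simp [inv_pz, sq, mul_assoc]
    _ = px⁻¹ * pz⁻¹ * pa := by rw [inv_pa, ← mul_assoc, commute_px_pz.inv_inv.eq]

theorem pb_mul_pa : pb * pa = px⁻¹ * py * pz⁻¹ * (pa * pb) := by
  calc pb * pa = pb * (pa * pb) * pb⁻¹ := by group
    _ = px⁻¹ * pz⁻¹ * py * (pa * pb) := by
      rw [pb_mul_pab, inv_pb, mul_assoc _ pa, ← mul_assoc pa, semiconjBy_pa_py.inv_right.eq,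
        inv_inv]
      simp only [mul_assoc]
    _ = px⁻¹ * py * pz⁻¹ * (pa * pb) := by
      rw [mul_assoc px⁻¹, commute_py_pz.inv_right.symm.eq, ← mul_assoc px⁻¹]

end Relations

section Automorphism

/-- The automorphism `a ↦ a`, `b ↦ b⁻¹` of `P`. -/
def φ₁ : P ≃* P :=
  let f : P →* P := lift pa pb⁻¹ isPromislowPair_pa_pb.inv_right
  have hf : f.comp f = .id P := hom_ext (by simp [f]) (by simp [f])
  f.toMulEquiv f hf hf

@[simp]
theorem φ₁_pa : φ₁ pa = pa := by simp [φ₁]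

@[simp]
theorem φ₁_pb : φ₁ pb = pb⁻¹ := by simp [φ₁]

variable {k : Type*} [CommRing k] {s : k} (hs : s ^ 4 = -1)

/-- The unit `s²`, with inverse `-s²`. -/
def sqUnit : kˣ := ⟨s ^ 2, -s ^ 2, by linear_combination -hs, by linear_combination -hs⟩

theorem sqUnit_sq : sqUnit hs ^ 2 = -1 :=
  Units.ext <| by simp [sqUnit, ← pow_mul, hs]

/-- The homomorphism `a ↦ s²`, `b ↦ -1` from `P` to `kˣ`. -/
def χ₁ : P →* kˣ :=
  lift (sqUnit hs) (-1) ⟨by simp [sqUnit_sq, SemiconjBy], by simp⟩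

@[simp]
theorem χ₁_pa : χ₁ hs pa = sqUnit hs := lift_pa

@[simp]
theorem χ₁_pb : χ₁ hs pb = -1 := lift_pb

theorem χ₁_px : χ₁ hs px = -1 := by simp [px, sqUnit_sq]

theorem χ₁_py : χ₁ hs py = 1 := by simp [py]

theorem χ₁_pz : χ₁ hs pz = -1 := by simp [pz, sqUnit_sq]

end Automorphism

section CrossedProduct

variable {k : Type*} [CommRing k]

open Monomial (scale)

/-- The map from monomials to `P` sending `x`, `y`, `z` to `a²`, `b²`, `(ab)²`. -/
def monomialHom : Monomial →* P :=
  Monomial.lift px py pz commute_px_py commute_px_pz commute_py_pz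

@[simp]
theorem monomialHom_x : monomialHom .x = px := Monomial.lift_x

@[simp]
theorem monomialHom_y : monomialHom .y = py := Monomial.lift_y

@[simp]
theorem monomialHom_z : monomialHom .z = pz := Monomial.lift_z

theorem semiconjBy_pa_monomialHom (l : Monomial) :
    SemiconjBy pa (monomialHom l) (monomialHom (scale 1 (-1) (-1) l)) :=
  Monomial.semiconjBy_lift (by simpa using semiconjBy_pa_px) (by simpa using semiconjBy_pa_py)
    (by simpa using semiconjBy_pa_pz) l

theorem semiconjBy_pb_monomialHom (l : Monomial) :
    SemiconjBy pb (monomialHom l) (monomialHom (scale (-1) 1 (-1) l)) :=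
  Monomial.semiconjBy_lift (by simpa using semiconjBy_pb_px) (by simpa using semiconjBy_pb_py)
    (by simpa using semiconjBy_pb_pz) l

theorem semiconjBy_pab_monomialHom (l : Monomial) :
    SemiconjBy (pa * pb) (monomialHom l) (monomialHom (scale (-1) (-1) 1 l)) :=
  Monomial.semiconjBy_lift (by simpa using semiconjBy_pab_px) (by simpa using semiconjBy_pab_py)
    (by simpa using semiconjBy_pab_pz) l

namespace Coeffs

/-- The element `p + q·a + r·b + w·ab` of `k[P]` with coefficients `p, q, r, w`. -/
def assemble (c : Coeffs k[P]) : k[P] :=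
  c.one + c.a * of k P pa + c.b * of k P pb + c.ab * of k P (pa * pb)

/-- The element of `k[P]` whose coefficients are given as Laurent polynomials in `x`, `y`, `z`. -/
def toGroupRing (c : Coeffs k[Monomial]) : k[P] :=
  (c.map (mapDomainAlgHom k k monomialHom)).assemble

theorem toGroupRing_mul (c d : Coeffs k[Monomial]) :
    c.toGroupRing * d.toGroupRing =
      (twistedMul (unitOf .x) (unitOf .y) (unitOf .z) c d
        (d.map (mapDomainAlgHom k k (scale 1 (-1) (-1))))
        (d.map (mapDomainAlgHom k k (scale (-1) 1 (-1))))
        (d.map (mapDomainAlgHom k k (scale (-1) (-1) 1)))).toGroupRing := by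
  have aa := coset_mul_coset (k := k) _ semiconjBy_pa_monomialHom (v := pa) (m := .x) (w := 1)
    (by simp [pa_mul_pa])
  have ab := coset_mul_coset (k := k) _ semiconjBy_pa_monomialHom (v := pb) (m := 1)
    (w := pa * pb) (by simp)
  have a_ab := coset_mul_coset (k := k) _ semiconjBy_pa_monomialHom (v := pa * pb) (m := .x)
    (w := pb) (by simp [pa_mul_pab])
  have ba := coset_mul_coset (k := k) _ semiconjBy_pb_monomialHom (v := pa)
    (m := .x⁻¹ * .y * .z⁻¹) (w := pa * pb) (by simp [pb_mul_pa])
  have bb := coset_mul_coset (k := k) _ semiconjBy_pb_monomialHom (v := pb) (m := .y) (w := 1)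
    (by simp [pb_mul_pb])
  have b_ab := coset_mul_coset (k := k) _ semiconjBy_pb_monomialHom (v := pa * pb)
    (m := .x⁻¹ * .z⁻¹) (w := pa) (by simp [pb_mul_pab])
  have ab_a := coset_mul_coset (k := k) _ semiconjBy_pab_monomialHom (v := pa)
    (m := .y⁻¹ * .z) (w := pb) (by simp [pab_mul_pa])
  have ab_b := coset_mul_coset (k := k) _ semiconjBy_pab_monomialHom (v := pb)
    (m := .y⁻¹) (w := pa) (by simp [pab_mul_pb])
  have ab_ab := coset_mul_coset (k := k) _ semiconjBy_pab_monomialHom (v := pa * pb) (m := .z)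
    (w := 1) (by simp [pab_mul_pab])
  have one_v (c d : k[Monomial]) (v : P) :
      mapDomainAlgHom k k monomialHom c * (mapDomainAlgHom k k monomialHom d * of k P v) =
        mapDomainAlgHom k k monomialHom (c * d) * of k P v := by
    rw [map_mul, mul_assoc]
  simp only [toGroupRing, assemble, Coeffs.map, mul_add, add_mul, aa, ab, a_ab, ba, bb,
    b_ab, ab_a, ab_b, ab_ab, one_v, coset_mul_mapDomain _ semiconjBy_pa_monomialHom,
    coset_mul_mapDomain _ semiconjBy_pb_monomialHom,
    coset_mul_mapDomain _ semiconjBy_pab_monomialHom, ← map_mul (mapDomainAlgHom k k monomialHom)]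
  simp only [twistedMul, map_add, add_mul, ← map_mul unitOf, ← map_inv unitOf,
    map_one, mul_one, Units.val_one]
  abel

end Coeffs

theorem φ₁_pz : φ₁ pz = pz := by
  have h : pa * pb⁻¹ = py * (pa * pb) := by
    rw [inv_pb, ← mul_assoc, semiconjBy_pa_py.inv_right.eq, inv_inv, mul_assoc]
  calc φ₁ pz = (py * (pa * pb)) ^ 2 := by simp [pz, h]
    _ = pz := by
      rw [sq, mul_assoc, ← mul_assoc (pa * pb), semiconjBy_pab_py.eq, mul_assoc,
        mul_inv_cancel_left, pab_mul_pab]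

theorem φ₁_monomialHom (l : Monomial) : φ₁ (monomialHom l) = monomialHom (scale 1 (-1) 1 l) :=
  Monomial.map_lift (f := φ₁.toMonoidHom) (by simp [px]) (by simp [py]) (by simp [φ₁_pz]) l

theorem inv_φ₁_monomialHom (l : Monomial) :
    (φ₁ (monomialHom l))⁻¹ = monomialHom (scale (-1) 1 (-1) l) := by
  rw [φ₁_monomialHom, ← map_inv, ← Monomial.scale_neg_one, Monomial.scale_scale]
  norm_num

theorem inv_φ₁_coset {g : P} {m : Monomial} (i j n : ℤ)
    (hg : ∀ l, SemiconjBy g (monomialHom l) (monomialHom (scale i j n l)))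
    (hm : (φ₁ g)⁻¹ = monomialHom m * g) (l : Monomial) :
    (φ₁ (monomialHom l * g))⁻¹ = monomialHom (m * scale (-i) j (-n) l) * g := by
  rw [map_mul, mul_inv_rev, hm, inv_φ₁_monomialHom, mul_assoc, (hg _).eq, map_mul, mul_assoc,
    Monomial.scale_scale]
  norm_num

theorem inv_φ₁_pab : (φ₁ (pa * pb))⁻¹ = py * pz⁻¹ * (pa * pb) := by
  calc (φ₁ (pa * pb))⁻¹ = pb * pa⁻¹ := by simp
    _ = pb * px⁻¹ * pa := by rw [inv_pa, mul_assoc]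
    _ = px * (pb * pa) := by rw [semiconjBy_pb_px.inv_right.eq, inv_inv, mul_assoc]
    _ = py * pz⁻¹ * (pa * pb) := by rw [pb_mul_pa]; group

theorem antipode_twist_toGroupRing (χ : P →* kˣ) (c : Coeffs k[Monomial]) :
    HopfAlgebra.antipode k (twist φ₁ χ c.toGroupRing) =
      Coeffs.toGroupRing
        ⟨twist (scale (-1) 1 (-1)) (χ.comp monomialHom) c.one,
          (χ pa : k) • ((unitOf .x⁻¹ : k[Monomial]ˣ) *
            twist (scale (-1) (-1) 1) (χ.comp monomialHom) c.a),
          (χ pb : k) • twist (scale 1 1 1) (χ.comp monomialHom) c.b,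
          (χ (pa * pb) : k) • ((unitOf (.y * .z⁻¹) : k[Monomial]ˣ) *
            twist (scale 1 (-1) (-1)) (χ.comp monomialHom) c.ab)⟩ := by
  have h_one := antipode_twist_coset (k := k) monomialHom (φ := (φ₁ : P →* P)) (g := 1) (m := 1)
    (ρ := scale (-1) 1 (-1)) (by simp [inv_φ₁_monomialHom]) χ c.one
  have h_a := antipode_twist_coset (k := k) monomialHom (φ := (φ₁ : P →* P))
    (inv_φ₁_coset (m := .x⁻¹) _ _ _ semiconjBy_pa_monomialHom (by simp [inv_pa])) χ c.a
  have h_b := antipode_twist_coset (k := k) monomialHom (φ := (φ₁ : P →* P))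
    (inv_φ₁_coset (m := 1) _ _ _ semiconjBy_pb_monomialHom (by simp)) χ c.b
  have h_ab := antipode_twist_coset (k := k) monomialHom (φ := (φ₁ : P →* P))
    (inv_φ₁_coset (m := .y * .z⁻¹) _ _ _ semiconjBy_pab_monomialHom
      (by rw [inv_φ₁_pab]; simp)) χ c.ab
  simp only [map_one, mul_one, Units.val_one, one_smul, one_mul, neg_neg] at h_one h_a h_b h_ab
  simp only [Coeffs.toGroupRing, Coeffs.assemble, Coeffs.map, map_add, h_one, h_a, h_b, h_ab]

end CrossedProduct

section Unitarity

variable {k : Type*} [CommRing k]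

/-- The element `α` of `k[P]`, for arbitrary scalars `s` and `t`. -/
def alpha (s t : k) : k[P] :=
  (Coeffs.alpha s t (unitOf .x : k[Monomial]ˣ) (unitOf .y) (unitOf .z)).toGroupRing

/-- The element `β` of `k[P]`, for arbitrary scalars `s` and `t`. -/
def beta (s t : k) : k[P] :=
  (Coeffs.beta s t (unitOf .x : k[Monomial]ˣ) (unitOf .y) (unitOf .z)).toGroupRing

variable {s t : k}

theorem alpha_mul_beta (hs : s ^ 4 = -1) (ht : t ^ 4 = -1) : alpha s t * beta s t = 1 := by
  simp only [alpha, beta, Coeffs.toGroupRing_mul, Coeffs.map_beta, map_mapDomain_unitOf,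
    Monomial.scale_x, Monomial.scale_y, Monomial.scale_z, map_inv, zpow_one, zpow_neg,
    Coeffs.alpha_twistedMul_beta hs ht]
  simp [Coeffs.toGroupRing, Coeffs.assemble, Coeffs.map]

theorem beta_mul_alpha (hs : s ^ 4 = -1) (ht : t ^ 4 = -1) : beta s t * alpha s t = 1 := by
  simp only [alpha, beta, Coeffs.toGroupRing_mul, Coeffs.map_alpha, map_mapDomain_unitOf,
    Monomial.scale_x, Monomial.scale_y, Monomial.scale_z, map_inv, zpow_one, zpow_neg,
    Coeffs.beta_twistedMul_alpha hs ht]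
  simp [Coeffs.toGroupRing, Coeffs.assemble, Coeffs.map]

theorem antipode_twist_alpha (hs : s ^ 4 = -1) :
    HopfAlgebra.antipode k (twist φ₁ (χ₁ hs) (alpha s t)) = beta s t := by
  have twist_scale_alpha (i j l : ℤ) :=
    Coeffs.map_alpha (twist (Monomial.scale i j l) ((χ₁ hs).comp monomialHom)) s t
      (unitOf .x) (unitOf .y) (unitOf .z)
  simp only [map_twist_unitOf, MonoidHom.comp_apply, monomialHom_x, monomialHom_y, monomialHom_z,
    χ₁_px, χ₁_py, χ₁_pz, Monomial.scale_x, Monomial.scale_y, Monomial.scale_z, map_zpow,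
    Coeffs.map, Coeffs.ext_iff] at twist_scale_alpha
  rw [alpha, beta, antipode_twist_toGroupRing, Coeffs.beta_eq_alpha hs]
  simp [twist_scale_alpha, sqUnit]

end Unitarity

section Ring

theorem s_pow_four : s ^ 4 = -1 := by
  rw [eq_neg_iff_add_eq_zero]
  exact Ideal.Quotient.eq_zero_iff_mem.2 (Ideal.subset_span (Or.inl rfl))

theorem t_pow_four : t ^ 4 = -1 := by
  rw [eq_neg_iff_add_eq_zero]
  exact Ideal.Quotient.eq_zero_iff_mem.2 (Ideal.subset_span (Or.inr rfl))

theorem alpha_eq_αU : alpha s t = αU := by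
  rw [alpha, Coeffs.toGroupRing, Coeffs.map_alpha]
  simp only [map_mapDomain_unitOf, monomialHom_x, monomialHom_y, monomialHom_z, Coeffs.alpha,
    Coeffs.assemble, ← map_mul unitOf, ← map_inv unitOf, ← map_pow unitOf, val_unitOf,
    smul_mul_assoc]
  rfl

theorem beta_eq_βU : beta s t = βU := by
  rw [beta, Coeffs.toGroupRing, Coeffs.map_beta]
  simp only [map_mapDomain_unitOf, monomialHom_x, monomialHom_y, monomialHom_z, Coeffs.beta,
    Coeffs.assemble, ← map_mul unitOf, ← map_inv unitOf, ← map_pow unitOf, val_unitOf,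
    smul_mul_assoc]
  rfl

end Ring

end Promislow

open Promislow in
theorem alpha_theta1_unitary_general {k : Type*} [CommRing k] {s t : k} (hs : s ^ 4 = -1)
    (ht : t ^ 4 = -1) :
    ∃ (φ : P ≃* P) (χ : P →* kˣ)
      (θ : MonoidAlgebra k P ≃ₐ[k] MonoidAlgebra k P)
      (star : MonoidAlgebra k P →ₗ[k] MonoidAlgebra k P),
      φ pa = pa ∧ φ pb = pb⁻¹ ∧
      ((χ pa : k) = s ^ 2) ∧ ((χ pb : k) = -1) ∧
      (∀ (g : P) (r : k),
        θ (MonoidAlgebra.single g r) = MonoidAlgebra.single (φ g) ((χ g : k) * r)) ∧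
      (∀ (g : P) (r : k),
        star (MonoidAlgebra.single g r) = MonoidAlgebra.single g⁻¹ r) ∧
      (∀ u v : MonoidAlgebra k P, star (u * v) = star v * star u) ∧
      star (θ (alpha s t)) = beta s t ∧ alpha s t * beta s t = 1 ∧ beta s t * alpha s t = 1 :=
  ⟨φ₁, χ₁ hs, twistEquiv φ₁ (χ₁ hs), HopfAlgebra.antipode k, φ₁_pa, φ₁_pb, by simp [sqUnit],
    by simp, twist_single _ _, by simp, HopfAlgebra.antipode_mul_antidistrib,
    antipode_twist_alpha hs, alpha_mul_beta hs ht, beta_mul_alpha hs ht⟩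

/-- With `φ₁ : P → P` the automorphism `a ↦ a, b ↦ b⁻¹`, `χ₁ : P → Rˣ` the homomorphism
`a ↦ s², b ↦ −1`, `θ₁` the `R`-algebra automorphism of `R[P]` given by
`θ₁(Σ λ_g g) = Σ χ₁(g) λ_g φ₁(g)`, and `*` the `R`-linear anti-involution of `R[P]`
extending `g ↦ g⁻¹`, we have `θ₁(α)* = β`; in particular, since `β = α⁻¹`, the unit `α`
is `θ₁`-unitary. -/
theorem alpha_theta1_unitary :
    ∃ (φ : P ≃* P) (χ : P →* Rrˣ)
      (θ : MonoidAlgebra Rr P ≃ₐ[Rr] MonoidAlgebra Rr P)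
      (star : MonoidAlgebra Rr P →ₗ[Rr] MonoidAlgebra Rr P),
      φ pa = pa ∧ φ pb = pb⁻¹ ∧
      ((χ pa : Rr) = s ^ 2) ∧ ((χ pb : Rr) = -1) ∧
      (∀ (g : P) (r : Rr),
        θ (MonoidAlgebra.single g r) = MonoidAlgebra.single (φ g) ((χ g : Rr) * r)) ∧
      (∀ (g : P) (r : Rr),
        star (MonoidAlgebra.single g r) = MonoidAlgebra.single g⁻¹ r) ∧
      (∀ u v : MonoidAlgebra Rr P, star (u * v) = star v * star u) ∧
      star (θ αU) = βU ∧ αU * βU = 1 ∧ βU * αU = 1 := by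
  simpa only [Promislow.alpha_eq_αU, Promislow.beta_eq_βU] using
    alpha_theta1_unitary_general Promislow.s_pow_four Promislow.t_pow_four
end
end

section
/- The image of α under the ring homomorphism R[P] → R[P^{ab}] induced by the abelianization map P → P^{ab} equals 1. -/
open MvPolynomial

noncomputable section

/-!
In `P` both `x = a²` and `y = b²` are conjugate to their inverses. In a commutative image of `P`
the elements `x` and `y` therefore square to `1`, while `z = (ab)²` becomes `xy`, so that `x`, `y`,
`z` multiply as in the Klein four-group. Under these rules the terms of `α_a`, `α_b` and `α_{ab}`
cancel in pairs and `α₁` collapses to `1`.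
-/

section Generic

variable {Γ M : Type*} [Group Γ] {g : Γ}

theorem map_mul_self_eq_one_of_isConj_inv [CommMonoid M] (f : Γ →* M) (h : IsConj g g⁻¹) :
    f g * f g = 1 := by
  have map_inv_eq : f g = f g⁻¹ := isConj_iff_eq.mp (f.map_isConj h)
  calc f g * f g = f g * f g⁻¹ := by rw [← map_inv_eq]
    _ = 1 := by rw [← map_mul, mul_inv_cancel, map_one]

theorem map_inv_eq_of_map_mul_self_eq_one [Monoid M] (f : Γ →* M) (h : f g * f g = 1) :
    f g⁻¹ = f g :=
  left_inv_eq_right_inv (by rw [← map_mul, inv_mul_cancel, map_one]) h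

end Generic

theorem pb_inv_mul_px_mul_pb : pb⁻¹ * px * pb = px⁻¹ :=
  eq_inv_of_mul_eq_one_left <| PresentedGroup.one_of_mem (rels := Prels) (Or.inl rfl)

theorem pa_inv_mul_py_mul_pa : pa⁻¹ * py * pa = py⁻¹ :=
  eq_inv_of_mul_eq_one_left <| PresentedGroup.one_of_mem (rels := Prels) (Or.inr rfl)

theorem isConj_px_inv : IsConj px px⁻¹ :=
  isConj_iff.mpr ⟨pb⁻¹, by rw [inv_inv, pb_inv_mul_px_mul_pb]⟩

theorem isConj_py_inv : IsConj py py⁻¹ :=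
  isConj_iff.mpr ⟨pa⁻¹, by rw [inv_inv, pa_inv_mul_py_mul_pa]⟩

section CommutativeImage

variable {M : Type*} [CommMonoid M] (f : P →* M)

theorem map_px_mul_self : f px * f px = 1 :=
  map_mul_self_eq_one_of_isConj_inv f isConj_px_inv

theorem map_py_mul_self : f py * f py = 1 :=
  map_mul_self_eq_one_of_isConj_inv f isConj_py_inv

theorem map_px_mul_map_py : f px * f py = f pz := by
  simp only [px, py, pz, map_pow, map_mul, mul_pow]

theorem map_px_mul_map_pz : f px * f pz = f py := by
  rw [← map_px_mul_map_py, ← mul_assoc, map_px_mul_self, one_mul]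

theorem map_py_mul_map_pz : f py * f pz = f px := by
  rw [← map_px_mul_map_py, mul_left_comm, map_py_mul_self, mul_one]

theorem map_pz_mul_self : f pz * f pz = 1 := by
  calc f pz * f pz = f px * (f py * f pz) := by rw [← mul_assoc, map_px_mul_map_py]
    _ = 1 := by rw [map_py_mul_map_pz, map_px_mul_self]

theorem map_px_inv : f px⁻¹ = f px :=
  map_inv_eq_of_map_mul_self_eq_one f (map_px_mul_self f)

theorem map_py_inv : f py⁻¹ = f py :=
  map_inv_eq_of_map_mul_self_eq_one f (map_py_mul_self f)

theorem map_pz_inv : f pz⁻¹ = f pz :=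
  map_inv_eq_of_map_mul_self_eq_one f (map_pz_mul_self f)

end CommutativeImage

theorem map_smul_eq_map_algebraMap_mul {R A S : Type*} [CommSemiring R] [Semiring A] [Algebra R A]
    [NonAssocSemiring S] (φ : A →+* S) (c : R) (u : A) :
    φ (c • u) = φ (algebraMap R A c) * φ u := by
  rw [Algebra.smul_def, map_mul]

/-- The restriction of a ring homomorphism `R[Γ] → S` to the elements of `Γ`. Through it, facts
about monoid homomorphisms out of `P` apply to the terms of `α`. -/
def groupRestriction {R Γ S : Type*} [Semiring R] [Monoid Γ] [NonAssocSemiring S]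
    (φ : MonoidAlgebra R Γ →+* S) : Γ →* S :=
  (φ : MonoidAlgebra R Γ →* S).comp (MonoidAlgebra.of R Γ)

theorem map_G {S : Type*} [NonAssocSemiring S] (φ : MonoidAlgebra Rr P →+* S) (g : P) :
    φ (G g) = groupRestriction φ g :=
  rfl

section CommRing

variable {S : Type*} [CommRing S] (φ : MonoidAlgebra Rr P →+* S)

theorem map_α1 : φ α1 = 1 := by
  simp only [α1, map_add, map_sub, map_one, map_smul_eq_map_algebraMap_mul, map_G, map_mul,
    map_px_inv, map_py_inv, map_pz_inv, map_px_mul_map_pz, map_py_mul_map_pz]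
  ring

theorem map_αa : φ αa = 0 := by
  simp only [αa, map_add, map_sub, map_neg, map_one, map_smul_eq_map_algebraMap_mul, map_G,
    map_mul, map_px_inv, map_py_inv, map_px_mul_map_py, map_py_mul_map_pz, map_pz_mul_self]
  ring

theorem map_αb : φ αb = 0 := by
  simp only [αb, map_add, map_sub, map_smul_eq_map_algebraMap_mul, map_G, map_mul, sq,
    map_px_inv, map_py_inv, map_px_mul_map_py, map_px_mul_map_pz, map_pz_mul_self]
  ring

theorem map_αab : φ αab = 0 := by
  simp only [αab, map_add, map_sub, map_neg, map_smul_eq_map_algebraMap_mul, map_G, map_mul,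
    sq, map_px_inv, map_pz_inv, map_px_mul_map_py, map_px_mul_map_pz, map_py_mul_map_pz,
    map_pz_mul_self]
  ring

end CommRing

theorem alpha_abelianization_trivial_general {S : Type*} [CommRing S]
    (φ : MonoidAlgebra Rr P →+* S) : φ αU = 1 := by
  simp only [αU, map_add, map_smul_eq_map_algebraMap_mul, map_mul, map_α1, map_αa, map_αb, map_αab,
    zero_mul, mul_zero, add_zero]

/-- The image of `α` under the ring homomorphism `R[P] → R[Pᵃᵇ]` induced by the
abelianization map `P → Pᵃᵇ` equals `1`. -/
theorem alpha_abelianization_trivial :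
    MonoidAlgebra.mapDomainRingHom Rr (Abelianization.of : P →* Abelianization P) αU = 1 :=
  alpha_abelianization_trivial_general (S := MonoidAlgebra Rr (Abelianization P)) _
end
end

section
/- The group S is isomorphic to the group defined by the presentation ⟨a, b | a⁻¹b²ab², a⁻²ba⁻²b³⟩, via the map sending x ↦ a and y ↦ ab⁻¹. -/
noncomputable section

/-- The two relators of the Soelberg group `S = ⟨x, y | (xy)²(xy⁻¹)², (yx)²(yx⁻¹)²⟩`. -/
def Srels : Set (FreeGroup (Fin 2)) :=
  {(FreeGroup.of 0 * FreeGroup.of 1) ^ 2 * (FreeGroup.of 0 * (FreeGroup.of 1)⁻¹) ^ 2,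
   (FreeGroup.of 1 * FreeGroup.of 0) ^ 2 * (FreeGroup.of 1 * (FreeGroup.of 0)⁻¹) ^ 2}

/-- The Soelberg group. -/
abbrev S : Type := PresentedGroup Srels

def sx : S := PresentedGroup.of 0
def sy : S := PresentedGroup.of 1

/-- The relators of the presentation `⟨a, b | a⁻¹b²ab², a⁻²ba⁻²b³⟩`. -/
def Qrels : Set (FreeGroup (Fin 2)) :=
  {(FreeGroup.of 0)⁻¹ * (FreeGroup.of 1) ^ 2 * FreeGroup.of 0 * (FreeGroup.of 1) ^ 2,
   ((FreeGroup.of 0) ^ 2)⁻¹ * FreeGroup.of 1 * ((FreeGroup.of 0) ^ 2)⁻¹ * (FreeGroup.of 1) ^ 3}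

/-- The group `⟨a, b | a⁻¹b²ab², a⁻²ba⁻²b³⟩`. -/
abbrev Q : Type := PresentedGroup Qrels

def qa : Q := PresentedGroup.of 0
def qb : Q := PresentedGroup.of 1

/-!
Substituting `x = a`, `y = ab⁻¹` is an automorphism of the free group of rank two. With
`p = a⁻¹b²ab²` and `q = a⁻²ba⁻²b³`, it turns `(yx)²(yx⁻¹)²` into a conjugate of `q⁻¹`, and
`(xy)²(xy⁻¹)²` into a conjugate of `q⁻¹` times a conjugate of `p`. So a normal subgroup contains the
images of both Soelberg relators exactly when it contains `p` and `q`.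
-/

section NormalSubgroup

variable {G : Type*} [Group G]

theorem conj_mem_iff {N : Subgroup G} [hN : N.Normal] {g n : G} : g * n * g⁻¹ ∈ N ↔ n ∈ N := by
  rw [hN.mem_comm_iff, inv_mul_cancel_left]

theorem normalClosure_eq_of_subset_iff {s t : Set G}
    (h : ∀ N : Subgroup G, N.Normal → (s ⊆ N ↔ t ⊆ N)) :
    Subgroup.normalClosure s = Subgroup.normalClosure t :=
  le_antisymm
    (Subgroup.normalClosure_le_normal <|
      (h _ Subgroup.normalClosure_normal).2 Subgroup.subset_normalClosure)
    (Subgroup.normalClosure_le_normal <|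
      (h _ Subgroup.normalClosure_normal).1 Subgroup.subset_normalClosure)

theorem soelberg_relators_mem_iff (N : Subgroup G) [N.Normal] (a b : G) :
    ((a * (a * b⁻¹)) ^ 2 * (a * (a * b⁻¹)⁻¹) ^ 2 ∈ N ∧
        (a * b⁻¹ * a) ^ 2 * (a * b⁻¹ * a⁻¹) ^ 2 ∈ N) ↔
      a⁻¹ * b ^ 2 * a * b ^ 2 ∈ N ∧ (a ^ 2)⁻¹ * b * (a ^ 2)⁻¹ * b ^ 3 ∈ N := by
  set p := a⁻¹ * b ^ 2 * a * b ^ 2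
  set q := (a ^ 2)⁻¹ * b * (a ^ 2)⁻¹ * b ^ 3
  have first_relator : (a * (a * b⁻¹)) ^ 2 * (a * (a * b⁻¹)⁻¹) ^ 2 =
      b ^ 3 * q⁻¹ * (b ^ 3)⁻¹ * (a * p * a⁻¹) := by
    simp [p, q, pow_succ, mul_assoc]
  have second_relator : (a * b⁻¹ * a) ^ 2 * (a * b⁻¹ * a⁻¹) ^ 2 =
      a * b ^ 2 * q⁻¹ * (a * b ^ 2)⁻¹ := by
    simp [q, pow_succ, mul_assoc]
  rw [first_relator, second_relator, conj_mem_iff, inv_mem_iff]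
  refine and_congr_left fun hq ↦ ?_
  rw [mul_mem_cancel_left (conj_mem_iff.2 (inv_mem hq)), conj_mem_iff]

end NormalSubgroup

section PresentedGroupCongr

variable {α β : Type*} {R : Set (FreeGroup α)} {T : Set (FreeGroup β)}

/-- The isomorphism `⟨α | R⟩ ≃* ⟨β | T⟩` induced by an isomorphism of the free groups on the
generators that carries the normal closure of `R` to that of `T`. -/
def presentedGroupCongr (φ : FreeGroup α ≃* FreeGroup β)
    (h : Subgroup.normalClosure (φ '' R) = Subgroup.normalClosure T) :
    PresentedGroup R ≃* PresentedGroup T :=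
  QuotientGroup.congr _ _ φ <| (Subgroup.map_normalClosure R φ.toMonoidHom φ.surjective).trans h

theorem presentedGroupCongr_of (φ : FreeGroup α ≃* FreeGroup β)
    (h : Subgroup.normalClosure (φ '' R) = Subgroup.normalClosure T) (i : α) :
    presentedGroupCongr φ h (PresentedGroup.of i) = PresentedGroup.mk T (φ (FreeGroup.of i)) :=
  rfl

end PresentedGroupCongr

section NielsenDivEquiv

variable {α : Type*} [DecidableEq α] {i j : α}

/-- The automorphism of the free group on `α` that sends the generator `j` to `i j⁻¹` and fixes
every other generator, a composite of two elementary Nielsen transformations. -/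
def nielsenDivEquiv (hij : i ≠ j) : FreeGroup α ≃* FreeGroup α :=
  MonoidHom.toMulEquiv
    (FreeGroup.lift (Function.update FreeGroup.of j (FreeGroup.of i * (FreeGroup.of j)⁻¹)))
    (FreeGroup.lift (Function.update FreeGroup.of j ((FreeGroup.of j)⁻¹ * FreeGroup.of i)))
    (by ext k; obtain rfl | hk := eq_or_ne k j <;> simp [*])
    (by ext k; obtain rfl | hk := eq_or_ne k j <;> simp [*])

theorem nielsenDivEquiv_of_self (hij : i ≠ j) :
    nielsenDivEquiv hij (FreeGroup.of j) = FreeGroup.of i * (FreeGroup.of j)⁻¹ := by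
  simp [nielsenDivEquiv]

theorem nielsenDivEquiv_of_ne (hij : i ≠ j) {k : α} (hk : k ≠ j) :
    nielsenDivEquiv hij (FreeGroup.of k) = FreeGroup.of k := by
  simp [nielsenDivEquiv, hk]

end NielsenDivEquiv

theorem normalClosure_nielsenDivEquiv_image_Srels :
    Subgroup.normalClosure (nielsenDivEquiv (zero_ne_one (α := Fin 2)) '' Srels) =
      Subgroup.normalClosure Qrels := by
  refine normalClosure_eq_of_subset_iff fun N _ ↦ ?_
  simp only [Srels, Qrels, Set.image_pair, Set.pair_subset_iff, SetLike.mem_coe, map_mul, map_pow,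
    map_inv, nielsenDivEquiv_of_self, nielsenDivEquiv_of_ne _ (zero_ne_one (α := Fin 2))]
  exact soelberg_relators_mem_iff N _ _

/-- `S` is isomorphic to `⟨a, b | a⁻¹b²ab², a⁻²ba⁻²b³⟩` via `x ↦ a`, `y ↦ ab⁻¹`. -/
theorem S_iso_Q : ∃ e : S ≃* Q, e sx = qa ∧ e sy = qa * qb⁻¹ := by
  refine ⟨presentedGroupCongr _ normalClosure_nielsenDivEquiv_image_Srels, ?_, ?_⟩
  · rw [sx, presentedGroupCongr_of, nielsenDivEquiv_of_ne _ zero_ne_one]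
    rfl
  · rw [sy, presentedGroupCongr_of, nielsenDivEquiv_of_self]
    rfl
end
end

section
/- The group S is torsion-free: every element of S of finite order is the identity. -/
noncomputable section

/-!
Put `u = (xy)²`. The relations of `S` are invariant under `y ↦ y⁻¹`, which inverts `u`. They say
that `x` and `y` invert `u` by conjugation and imply `y x^m = u^(-m) x^(-m) y^(±1)`, with sign
`(-1)^m`, so every element of `S` can be written `u^i x^m y^k`.

On the other hand `S` acts on `ℤ³` by affine maps for which `u`, `x²` and `y²` are
`(a, b, c) ↦ (a + 2, b, c)`, `(a - 4c, b + 2, c)` and `(a + 2, b, c + 2)`. If `m` or `k` is odd,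
then `u^i x^m y^k` or its square translates some coordinate by a nonzero constant, hence has
infinite order. If both are even and the order is finite, the coordinates give `k = 0`, then
`m = 0`, then `i = 0`.
-/

section PermutationPowers

variable {α : Type*}

lemma eq_zero_of_isOfFinOrder_of_apply_eq_add {M : Type*} [AddLeftCancelMonoid M]
    [IsAddTorsionFree M] [Nonempty α] {σ : Equiv.Perm α} (hσ : IsOfFinOrder σ) {f : α → M} {c : M}
    (hf : ∀ v, f (σ v) = f v + c) : c = 0 := by
  obtain ⟨n, hn, hpow⟩ := isOfFinOrder_iff_pow_eq_one.1 hσ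
  obtain ⟨v⟩ := ‹Nonempty α›
  have drift (m : ℕ) : f ((σ ^ m) v) = f v + m • c := by
    induction m with
    | zero => simp
    | succ m ih => rw [pow_succ', Equiv.Perm.mul_apply, hf, ih, succ_nsmul, add_assoc]
  have hnc : n • c = 0 := by simpa [hpow] using drift n
  exact (nsmul_eq_zero_iff_right hn.ne').1 hnc

lemma zpow_apply_eq_of_succ {σ : Equiv.Perm α} {F : ℤ → α} {v : α} (hzero : F 0 = v)
    (hsucc : ∀ n, F (n + 1) = σ (F n)) (n : ℤ) : (σ ^ n) v = F n := by
  induction n using Int.induction_on with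
  | zero => simp [hzero]
  | succ n ih => rw [hsucc, ← ih, add_comm, zpow_one_add, Equiv.Perm.mul_apply]
  | pred n ih =>
    rw [sub_eq_neg_add, zpow_add, zpow_neg_one, Equiv.Perm.mul_apply, ih, Equiv.Perm.inv_eq_iff_eq,
      ← hsucc, neg_add_cancel_comm]

end PermutationPowers

/-- The elements `x` and `y` of a group satisfy the defining relations of the Soelberg group, i.e.
`sx ↦ x`, `sy ↦ y` extends to a homomorphism from `S`. -/
structure IsSoelbergPair {G : Type*} [Group G] (x y : G) : Prop where
  rel_left : (x * y) ^ 2 * (x * y⁻¹) ^ 2 = 1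
  rel_right : (y * x) ^ 2 * (y * x⁻¹) ^ 2 = 1

namespace IsSoelbergPair

variable {G : Type*} [Group G] {x y : G}

/-- The homomorphism from the Soelberg group sending the generators `sx`, `sy` to `x`, `y`. -/
def lift (h : IsSoelbergPair x y) : S →* G :=
  PresentedGroup.toGroup (f := ![x, y]) <| by
    rintro r (rfl | rfl)
    · simpa using h.rel_left
    · simpa using h.rel_right

@[simp]
lemma lift_sx (h : IsSoelbergPair x y) : h.lift sx = x := by simp [lift, sx]

@[simp]
lemma lift_sy (h : IsSoelbergPair x y) : h.lift sy = y := by simp [lift, sy]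

lemma left_mul_inv_right_sq (h : IsSoelbergPair x y) : (x * y⁻¹) ^ 2 = ((x * y) ^ 2)⁻¹ :=
  eq_inv_of_mul_eq_one_right h.rel_left

lemma right_mul_left_sq (h : IsSoelbergPair x y) : (y * x) ^ 2 = ((x * y) ^ 2)⁻¹ := by
  rw [eq_inv_of_mul_eq_one_left h.rel_right, ← inv_pow, mul_inv_rev, inv_inv,
    h.left_mul_inv_right_sq]

lemma semiconjBy_right (h : IsSoelbergPair x y) : SemiconjBy y ((x * y) ^ 2) ((x * y) ^ 2)⁻¹ := by
  rw [← h.right_mul_left_sq]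
  simp only [SemiconjBy, pow_two, mul_assoc]

lemma semiconjBy_left (h : IsSoelbergPair x y) : SemiconjBy x ((x * y) ^ 2) ((x * y) ^ 2)⁻¹ := by
  have hx : SemiconjBy x ((y * x) ^ 2) ((x * y) ^ 2) := by
    simp only [SemiconjBy, pow_two, mul_assoc]
  simpa [h.right_mul_left_sq] using hx.inv_right

lemma commute_sq_left (h : IsSoelbergPair x y) : Commute ((x * y) ^ 2) (x ^ 2) := by
  have hxx := h.semiconjBy_left.inv_right.mul_left h.semiconjBy_left
  rw [inv_inv, ← pow_two] at hxx
  exact hxx.symm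

lemma inv_right_mul_left_sq (h : IsSoelbergPair x y) : (y⁻¹ * x) ^ 2 = (x * y) ^ 2 := by
  have hy : SemiconjBy y ((y⁻¹ * x) ^ 2) ((x * y⁻¹) ^ 2) := by
    simp [SemiconjBy, pow_two, mul_assoc]
  rw [h.left_mul_inv_right_sq] at hy
  exact mul_left_cancel (hy.eq.trans h.semiconjBy_right.eq.symm)

lemma inv_right (h : IsSoelbergPair x y) : IsSoelbergPair x y⁻¹ where
  rel_left := by rw [inv_inv, h.left_mul_inv_right_sq, inv_mul_cancel]
  rel_right := by rw [h.inv_right_mul_left_sq, ← mul_inv_rev, inv_pow, mul_inv_cancel]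

lemma right_mul_left (h : IsSoelbergPair x y) : y * x = ((x * y) ^ 2)⁻¹ * x⁻¹ * y⁻¹ := by
  rw [← h.right_mul_left_sq]
  simp [pow_two, mul_assoc]

lemma inv_right_mul_left (h : IsSoelbergPair x y) : y⁻¹ * x = (x * y) ^ 2 * x⁻¹ * y := by
  simpa [h.left_mul_inv_right_sq] using h.inv_right.right_mul_left

lemma right_semiconjBy_sq_left (h : IsSoelbergPair x y) :
    SemiconjBy y (x ^ 2) (((x * y) ^ 2) ^ (-2 : ℤ) * (x ^ 2)⁻¹) := by
  have hx : x⁻¹ * (x * y) ^ 2 = ((x * y) ^ 2)⁻¹ * x⁻¹ := by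
    simpa using h.semiconjBy_left.inv_symm_left.inv_right.eq
  calc y * x ^ 2 = (y * x) * x := by rw [pow_two, mul_assoc]
    _ = ((x * y) ^ 2)⁻¹ * x⁻¹ * (y⁻¹ * x) := by rw [h.right_mul_left, mul_assoc]
    _ = ((x * y) ^ 2)⁻¹ * (x⁻¹ * (x * y) ^ 2) * x⁻¹ * y := by
      simp only [h.inv_right_mul_left, mul_assoc]
    _ = ((x * y) ^ 2) ^ (-2 : ℤ) * (x ^ 2)⁻¹ * y := by rw [hx]; group

lemma right_mul_left_zpow_two_mul (h : IsSoelbergPair x y) (j : ℤ) :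
    y * x ^ (2 * j) = ((x * y) ^ 2) ^ (-(2 * j)) * x ^ (-(2 * j)) * y := by
  have hj := (h.right_semiconjBy_sq_left.zpow_right j).eq
  rw [(h.commute_sq_left.zpow_left _).inv_right.mul_zpow, ← zpow_mul] at hj
  simpa [zpow_mul] using hj

lemma right_mul_left_zpow_two_mul_add_one (h : IsSoelbergPair x y) (j : ℤ) :
    y * x ^ (2 * j + 1) = ((x * y) ^ 2) ^ (-(2 * j + 1)) * x ^ (-(2 * j + 1)) * y⁻¹ := by
  have hc : Commute (x ^ (-(2 * j))) ((x * y) ^ 2)⁻¹ := by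
    rw [← mul_neg, zpow_mul, zpow_ofNat]
    exact ((h.commute_sq_left.zpow_right _).inv_left).symm
  calc y * x ^ (2 * j + 1) = y * x ^ (2 * j) * x := by rw [zpow_add_one, mul_assoc]
    _ = ((x * y) ^ 2) ^ (-(2 * j)) * x ^ (-(2 * j)) * (y * x) := by
      rw [h.right_mul_left_zpow_two_mul, mul_assoc]
    _ = ((x * y) ^ 2) ^ (-(2 * j)) * (x ^ (-(2 * j)) * ((x * y) ^ 2)⁻¹) * x⁻¹ * y⁻¹ := by
      simp only [h.right_mul_left, mul_assoc]
    _ = ((x * y) ^ 2) ^ (-(2 * j + 1)) * x ^ (-(2 * j + 1)) * y⁻¹ := by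
      rw [hc.eq, neg_add, zpow_add, zpow_add, zpow_neg_one, zpow_neg_one]
      simp only [mul_assoc]

end IsSoelbergPair

section NormalForm

variable {G : Type*} [Group G] {x y : G}

/-- The normal form `u^i x^m y^k`, where `u = (xy)²`, of an element of a group generated by a
Soelberg pair. -/
def normalForm (x y : G) (i m k : ℤ) : G :=
  ((x * y) ^ 2) ^ i * x ^ m * y ^ k

/-- The set of all elements in normal form with respect to `x` and `y`. -/
def normalForms (x y : G) : Set G :=
  {g | ∃ i m k, normalForm x y i m k = g}

lemma map_normalForm {H : Type*} [Group H] (f : G →* H) (x y : G) (i m k : ℤ) :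
    f (normalForm x y i m k) = normalForm (f x) (f y) i m k := by
  simp [normalForm]

namespace IsSoelbergPair

lemma left_mul_sq_zpow (h : IsSoelbergPair x y) (i : ℤ) :
    x * ((x * y) ^ 2) ^ i = ((x * y) ^ 2) ^ (-i) * x := by
  simpa using (h.semiconjBy_left.zpow_right i).eq

lemma right_mul_sq_zpow (h : IsSoelbergPair x y) (i : ℤ) :
    y * ((x * y) ^ 2) ^ i = ((x * y) ^ 2) ^ (-i) * y := by
  simpa using (h.semiconjBy_right.zpow_right i).eq

lemma left_mul_normalForm (h : IsSoelbergPair x y) (i m k : ℤ) :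
    x * normalForm x y i m k = normalForm x y (-i) (m + 1) k := by
  simp only [normalForm, ← mul_assoc, h.left_mul_sq_zpow]
  simp only [mul_assoc, add_comm m, zpow_one_add]

lemma right_mul_normalForm_two_mul (h : IsSoelbergPair x y) (i j k : ℤ) :
    y * normalForm x y i (2 * j) k = normalForm x y (-i - 2 * j) (-(2 * j)) (1 + k) := by
  simp only [normalForm, ← mul_assoc, h.right_mul_sq_zpow, sub_eq_add_neg, zpow_add, zpow_one]
  simp only [mul_assoc, h.right_mul_left_zpow_two_mul]

lemma right_mul_normalForm_two_mul_add_one (h : IsSoelbergPair x y) (i j k : ℤ) :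
    y * normalForm x y i (2 * j + 1) k =
      normalForm x y (-i - (2 * j + 1)) (-(2 * j + 1)) (-1 + k) := by
  calc y * normalForm x y i (2 * j + 1) k
      = ((x * y) ^ 2) ^ (-i) * (y * x ^ (2 * j + 1)) * y ^ k := by
        simp only [normalForm, ← mul_assoc, h.right_mul_sq_zpow]
    _ = normalForm x y (-i - (2 * j + 1)) (-(2 * j + 1)) (-1 + k) := by
        simp only [h.right_mul_left_zpow_two_mul_add_one, normalForm, sub_eq_add_neg,
          zpow_add _ (-i), zpow_add y, zpow_neg_one, mul_assoc]

lemma normalForm_inv_right (h : IsSoelbergPair x y) (i m k : ℤ) :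
    normalForm x y⁻¹ i m k = normalForm x y (-i) m (-k) := by
  simp [normalForm, h.left_mul_inv_right_sq]

lemma normalForms_inv_right (h : IsSoelbergPair x y) : normalForms x y⁻¹ = normalForms x y := by
  refine Set.Subset.antisymm ?_ ?_ <;> rintro _ ⟨i, m, k, rfl⟩
  · exact ⟨-i, m, -k, (h.normalForm_inv_right i m k).symm⟩
  · exact ⟨-i, m, -k, by simp [h.normalForm_inv_right]⟩

lemma left_mul_mem_normalForms (h : IsSoelbergPair x y) {g : G} (hg : g ∈ normalForms x y) :
    x * g ∈ normalForms x y := by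
  obtain ⟨i, m, k, rfl⟩ := hg
  exact ⟨_, _, _, (h.left_mul_normalForm i m k).symm⟩

lemma left_inv_mul_mem_normalForms (h : IsSoelbergPair x y) {g : G} (hg : g ∈ normalForms x y) :
    x⁻¹ * g ∈ normalForms x y := by
  obtain ⟨i, m, k, rfl⟩ := hg
  exact ⟨-i, m - 1, k, by rw [eq_inv_mul_iff_mul_eq, h.left_mul_normalForm]; simp⟩

lemma right_mul_mem_normalForms (h : IsSoelbergPair x y) {g : G} (hg : g ∈ normalForms x y) :
    y * g ∈ normalForms x y := by
  obtain ⟨i, m, k, rfl⟩ := hg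
  obtain ⟨j, rfl | rfl⟩ := m.even_or_odd'
  · exact ⟨_, _, _, (h.right_mul_normalForm_two_mul i j k).symm⟩
  · exact ⟨_, _, _, (h.right_mul_normalForm_two_mul_add_one i j k).symm⟩

lemma right_inv_mul_mem_normalForms (h : IsSoelbergPair x y) {g : G} (hg : g ∈ normalForms x y) :
    y⁻¹ * g ∈ normalForms x y := by
  rw [← h.normalForms_inv_right] at hg ⊢
  exact h.inv_right.right_mul_mem_normalForms hg

lemma mem_normalForms_of_mem_closure (h : IsSoelbergPair x y) {g : G}
    (hg : g ∈ Subgroup.closure {x, y}) : g ∈ normalForms x y := by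
  induction hg using Subgroup.closure_induction_left with
  | one => exact ⟨0, 0, 0, by simp [normalForm]⟩
  | mul_left a ha b _ hb =>
    obtain rfl | rfl := ha
    · exact h.left_mul_mem_normalForms hb
    · exact h.right_mul_mem_normalForms hb
  | inv_mul_cancel a ha b _ hb =>
    obtain rfl | rfl := ha
    · exact h.left_inv_mul_mem_normalForms hb
    · exact h.right_inv_mul_mem_normalForms hb

end IsSoelbergPair

end NormalForm

lemma isSoelbergPair_sx_sy : IsSoelbergPair sx sy where
  rel_left := PresentedGroup.one_of_mem (rels := Srels) (Set.mem_insert _ _)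
  rel_right := PresentedGroup.one_of_mem (rels := Srels) (Set.mem_insert_of_mem _ rfl)

lemma closure_sx_sy : Subgroup.closure {sx, sy} = ⊤ := by
  rw [← PresentedGroup.closure_range_of Srels]
  congr 1
  ext g
  simp [Fin.exists_fin_two, sx, sy, eq_comm]

lemma exists_normalForm_eq (g : S) : ∃ i m k, normalForm sx sy i m k = g :=
  isSoelbergPair_sx_sy.mem_normalForms_of_mem_closure (closure_sx_sy ▸ Subgroup.mem_top g)

section AffineAction

/-- The affine permutation of `ℤ³` by which the generator `x` of `S` acts. -/
def affineX : Equiv.Perm (ℤ × ℤ × ℤ) where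
  toFun v := (-v.1 + 2 * v.2.2, v.2.1 + 1, -v.2.2)
  invFun v := (-v.1 - 2 * v.2.2, v.2.1 - 1, -v.2.2)
  left_inv v := by ext <;> dsimp only <;> ring
  right_inv v := by ext <;> dsimp only <;> ring

/-- The affine permutation of `ℤ³` by which the generator `y` of `S` acts. -/
def affineY : Equiv.Perm (ℤ × ℤ × ℤ) where
  toFun v := (-v.1 + 2 * v.2.2 + 1, -v.2.1 - 1, v.2.2 + 1)
  invFun v := (-v.1 + 2 * v.2.2 - 1, -v.2.1 - 1, v.2.2 - 1)
  left_inv v := by ext <;> dsimp only <;> ring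
  right_inv v := by ext <;> dsimp only <;> ring

lemma affineX_apply (a b c : ℤ) : affineX (a, b, c) = (-a + 2 * c, b + 1, -c) := rfl

lemma affineX_inv_apply (a b c : ℤ) : affineX⁻¹ (a, b, c) = (-a - 2 * c, b - 1, -c) := rfl

lemma affineY_apply (a b c : ℤ) : affineY (a, b, c) = (-a + 2 * c + 1, -b - 1, c + 1) := rfl

lemma affineY_inv_apply (a b c : ℤ) : affineY⁻¹ (a, b, c) = (-a + 2 * c - 1, -b - 1, c - 1) := rfl

lemma isSoelbergPair_affine : IsSoelbergPair affineX affineY where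
  rel_left := by
    ext ⟨a, b, c⟩ <;>
      simp only [pow_two, Equiv.Perm.mul_apply, affineX_apply, affineY_apply, affineY_inv_apply,
        Equiv.Perm.one_apply] <;> ring
  rel_right := by
    ext ⟨a, b, c⟩ <;>
      simp only [pow_two, Equiv.Perm.mul_apply, affineX_apply, affineY_apply, affineX_inv_apply,
        Equiv.Perm.one_apply] <;> ring

lemma affineX_mul_affineY_apply (a b c : ℤ) :
    (affineX * affineY) (a, b, c) = (a + 1, -b, -c - 1) := by
  simp only [Equiv.Perm.mul_apply, affineX_apply, affineY_apply, Prod.mk.injEq]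
  refine ⟨?_, ?_, ?_⟩ <;> ring

lemma affineX_mul_affineY_sq_zpow_apply (n a b c : ℤ) :
    (((affineX * affineY) ^ 2) ^ n) (a, b, c) = (a + 2 * n, b, c) := by
  refine zpow_apply_eq_of_succ (F := fun n ↦ (a + 2 * n, b, c)) (by simp) (fun n ↦ ?_) n
  rw [pow_two, Equiv.Perm.mul_apply, affineX_mul_affineY_apply, affineX_mul_affineY_apply]
  simp only [Prod.mk.injEq]
  refine ⟨?_, ?_, ?_⟩ <;> ring

lemma affineX_zpow_two_mul_apply (n a b c : ℤ) :
    (affineX ^ (2 * n)) (a, b, c) = (a - 4 * n * c, b + 2 * n, c) := by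
  rw [zpow_mul]
  refine zpow_apply_eq_of_succ (F := fun n ↦ (a - 4 * n * c, b + 2 * n, c)) (by simp)
    (fun n ↦ ?_) n
  simp only [zpow_two, Equiv.Perm.mul_apply, affineX_apply, Prod.mk.injEq]
  refine ⟨?_, ?_, ?_⟩ <;> ring

lemma affineY_zpow_two_mul_apply (n a b c : ℤ) :
    (affineY ^ (2 * n)) (a, b, c) = (a + 2 * n, b, c + 2 * n) := by
  rw [zpow_mul]
  refine zpow_apply_eq_of_succ (F := fun n ↦ (a + 2 * n, b, c + 2 * n)) (by simp) (fun n ↦ ?_) n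
  simp only [zpow_two, Equiv.Perm.mul_apply, affineY_apply, Prod.mk.injEq]
  refine ⟨?_, ?_, ?_⟩ <;> ring

lemma normalForm_affine_even_even_apply (i j l a b c : ℤ) :
    normalForm affineX affineY i (2 * j) (2 * l) (a, b, c) =
      (a - 4 * j * (c + 2 * l) + 2 * (i + l), b + 2 * j, c + 2 * l) := by
  rw [normalForm, Equiv.Perm.mul_apply, affineY_zpow_two_mul_apply, Equiv.Perm.mul_apply,
    affineX_zpow_two_mul_apply, affineX_mul_affineY_sq_zpow_apply, Prod.mk.injEq]
  exact ⟨by ring, rfl⟩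

lemma normalForm_affine_even_odd_apply (i j l a b c : ℤ) :
    normalForm affineX affineY i (2 * j) (2 * l + 1) (a, b, c) =
      (-a - 4 * j * (c + 2 * l + 1) + 2 * (i + c + l) + 1, -b + 2 * j - 1, c + 2 * l + 1) := by
  rw [normalForm, zpow_add_one, ← mul_assoc, Equiv.Perm.mul_apply, affineY_apply]
  refine (normalForm_affine_even_even_apply i j l _ _ _).trans ?_
  simp only [Prod.mk.injEq]
  refine ⟨?_, ?_, ?_⟩ <;> ring

lemma normalForm_affine_odd_even_apply (i j l a b c : ℤ) :
    normalForm affineX affineY i (2 * j + 1) (2 * l) (a, b, c) =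
      (-a + 4 * j * (c + 2 * l) + 2 * (i + c + l), b + 2 * j + 1, -c - 2 * l) := by
  rw [normalForm, Equiv.Perm.mul_apply, affineY_zpow_two_mul_apply, zpow_add_one, ← mul_assoc,
    Equiv.Perm.mul_apply, affineX_apply, Equiv.Perm.mul_apply, affineX_zpow_two_mul_apply,
    affineX_mul_affineY_sq_zpow_apply]
  simp only [Prod.mk.injEq]
  refine ⟨?_, ?_, ?_⟩ <;> ring

lemma normalForm_affine_odd_odd_apply (i j l a b c : ℤ) :
    normalForm affineX affineY i (2 * j + 1) (2 * l + 1) (a, b, c) =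
      (a + 4 * j * (c + 2 * l + 1) + 2 * (i + l) + 1, -b + 2 * j, -c - 2 * l - 1) := by
  rw [normalForm, zpow_add_one affineY, ← mul_assoc, Equiv.Perm.mul_apply, affineY_apply]
  refine (normalForm_affine_odd_even_apply i j l _ _ _).trans ?_
  simp only [Prod.mk.injEq]
  refine ⟨?_, ?_, ?_⟩ <;> ring

lemma eq_zero_of_isOfFinOrder_normalForm_affine_even_even {i j l : ℤ}
    (h : IsOfFinOrder (normalForm affineX affineY i (2 * j) (2 * l))) :
    i = 0 ∧ j = 0 ∧ l = 0 := by
  have hl : 2 * l = 0 := eq_zero_of_isOfFinOrder_of_apply_eq_add h (f := fun v ↦ v.2.2)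
    fun ⟨a, b, c⟩ ↦ by rw [normalForm_affine_even_even_apply]
  have hj : 2 * j = 0 := eq_zero_of_isOfFinOrder_of_apply_eq_add h (f := fun v ↦ v.2.1)
    fun ⟨a, b, c⟩ ↦ by rw [normalForm_affine_even_even_apply]
  obtain rfl : l = 0 := by omega
  obtain rfl : j = 0 := by omega
  have hi : 2 * i = 0 := eq_zero_of_isOfFinOrder_of_apply_eq_add h (f := fun v ↦ v.1)
    fun ⟨a, b, c⟩ ↦ by rw [normalForm_affine_even_even_apply]; ring
  exact ⟨by omega, rfl, rfl⟩

lemma not_isOfFinOrder_normalForm_affine_even_odd (i j l : ℤ) :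
    ¬ IsOfFinOrder (normalForm affineX affineY i (2 * j) (2 * l + 1)) := by
  intro h
  have hk : 2 * l + 1 = 0 := eq_zero_of_isOfFinOrder_of_apply_eq_add h (f := fun v ↦ v.2.2)
    fun ⟨a, b, c⟩ ↦ by rw [normalForm_affine_even_odd_apply]; ring
  omega

lemma not_isOfFinOrder_normalForm_affine_odd_even (i j l : ℤ) :
    ¬ IsOfFinOrder (normalForm affineX affineY i (2 * j + 1) (2 * l)) := by
  intro h
  have hm : 2 * j + 1 = 0 := eq_zero_of_isOfFinOrder_of_apply_eq_add h (f := fun v ↦ v.2.1)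
    fun ⟨a, b, c⟩ ↦ by rw [normalForm_affine_odd_even_apply]; ring
  omega

lemma not_isOfFinOrder_normalForm_affine_odd_odd (i j l : ℤ) :
    ¬ IsOfFinOrder (normalForm affineX affineY i (2 * j + 1) (2 * l + 1)) := by
  intro h
  have hsq : 4 * (j * (2 * l + 1) + i + l) + 2 = 0 :=
    eq_zero_of_isOfFinOrder_of_apply_eq_add (h.pow (n := 2)) (f := fun v ↦ v.1)
      fun ⟨a, b, c⟩ ↦ by
        rw [pow_two, Equiv.Perm.mul_apply, normalForm_affine_odd_odd_apply,
          normalForm_affine_odd_odd_apply]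
        ring
  omega

lemma eq_zero_of_isOfFinOrder_normalForm_affine {i m k : ℤ}
    (h : IsOfFinOrder (normalForm affineX affineY i m k)) : i = 0 ∧ m = 0 ∧ k = 0 := by
  obtain ⟨j, rfl | rfl⟩ := m.even_or_odd' <;> obtain ⟨l, rfl | rfl⟩ := k.even_or_odd'
  · simpa using eq_zero_of_isOfFinOrder_normalForm_affine_even_even h
  · exact absurd h (not_isOfFinOrder_normalForm_affine_even_odd i j l)
  · exact absurd h (not_isOfFinOrder_normalForm_affine_odd_even i j l)
  · exact absurd h (not_isOfFinOrder_normalForm_affine_odd_odd i j l)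

end AffineAction

/-- The group `S` is torsion-free: every element of finite order is the identity. -/
theorem S_torsion_free : ∀ g : S, IsOfFinOrder g → g = 1 := by
  intro g hg
  obtain ⟨i, m, k, rfl⟩ := exists_normalForm_eq g
  have hφ : IsOfFinOrder (normalForm affineX affineY i m k) := by
    simpa [map_normalForm] using isSoelbergPair_affine.lift.isOfFinOrder hg
  obtain ⟨rfl, rfl, rfl⟩ := eq_zero_of_isOfFinOrder_normalForm_affine hφ
  simp [normalForm]
end
end
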